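/- Let f be a long knot and let D be any diagram of f, possibly with transverse triple or higher multiple crossings, such that the subarcs of f near each multiple crossing are straight segments parallel to the plane N^⊥. Then for all sufficiently small ε > 0, I_X(f) = ⟨X, G_D⟩ + (1/2)·(⟨X′₁, G_D⟩ + ⟨X′₂, G_D⟩ + ⟨X′₃, G_D⟩) and I_Y(f) = 0. -/

import Mathlib

open MeasureTheory Filter Topology Set

noncomputable section

abbrev E2 : Type := EuclideanSpace ℝ (Fin 2)
abbrev E3 : Type := EuclideanSpace ℝ (Fin 3)
abbrev E4 : Type := EuclideanSpace ℝ (Fin 4)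
abbrev E6 : Type := EuclideanSpace ℝ (Fin 6)

/-- The point of `ℝ³` with the given coordinates. -/
def mk3 (x y z : ℝ) : E3 := (WithLp.equiv 2 (Fin 3 → ℝ)).symm ![x, y, z]

/-- The north pole `N = (0,0,1)` of `S² ⊆ ℝ³`. -/
def NP : E3 := mk3 0 0 1

/-- Projection of `ℝ³` onto the plane `N^⊥` (the first two coordinates). -/
def pr12 (v : E3) : ℝ × ℝ := (v 0, v 1)

/-- The `N`-coordinate. -/
def pr3 (v : E3) : ℝ := v 2

/-- `unitv v = v / ‖v‖`. -/
def unitv (v : E3) : E3 := ‖v‖⁻¹ • v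

/-- Determinant of the projections to `N^⊥` of two vectors (first vector, then second). -/
def cross2 (a b : E3) : ℝ := a 0 * b 1 - a 1 * b 0

/-- 3×3 determinant (scalar triple product); for `p ∈ S²` and `v, w` tangent to `S²` at
`p`, this is the value of the standard area form of `S²` at `p` on `(v, w)`. -/
def det3 (p v w : E3) : ℝ :=
  p 0 * (v 1 * w 2 - v 2 * w 1) - p 1 * (v 0 * w 2 - v 2 * w 0) +
    p 2 * (v 0 * w 1 - v 1 * w 0)

/-! ### Long knots and 3-component long links -/

/-- A long knot: a smooth embedding `ℝ ↪ ℝ³` which is standard outside `[-1,1]`. -/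
def IsLongKnot (f : ℝ → E3) : Prop :=
  ContDiff ℝ (⊤ : ℕ∞) f ∧ Function.Injective f ∧ (∀ t, deriv f t ≠ 0) ∧
    ∀ x : ℝ, 1 ≤ |x| → f x = mk3 x 0 0

/-- Smooth isotopy of long knots. -/
def KnotIsotopic (f₀ f₁ : ℝ → E3) : Prop :=
  ∃ H : ℝ → ℝ → E3,
    ContDiff ℝ (⊤ : ℕ∞) (fun p : ℝ × ℝ => H p.1 p.2) ∧
    (∀ s, IsLongKnot (H s)) ∧ H 0 = f₀ ∧ H 1 = f₁

/-- A 3-component long link: a smooth embedding `ℝ ⊔ ℝ ⊔ ℝ ↪ ℝ³`, standard outside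
`[-1,1]`, component `k` (for `k = 1,2,3`, i.e. index `i = k - 1 : Fin 3`) having ends
`x ↦ (x, (2 - k)|x|, 0)`. -/
def IsLongLink3 (f : Fin 3 → ℝ → E3) : Prop :=
  (∀ i, ContDiff ℝ (⊤ : ℕ∞) (f i)) ∧
  (∀ i j s t, f i s = f j t → i = j ∧ s = t) ∧
  (∀ i t, deriv (f i) t ≠ 0) ∧
  ∀ i (x : ℝ), 1 ≤ |x| → f i x = mk3 x ((1 - ((i : ℕ) : ℝ)) * |x|) 0

/-- Smooth isotopy of 3-component long links. -/
def LinkIsotopic (f₀ f₁ : Fin 3 → ℝ → E3) : Prop :=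
  ∃ H : ℝ → Fin 3 → ℝ → E3,
    (∀ i, ContDiff ℝ (⊤ : ℕ∞) (fun p : ℝ × ℝ => H p.1 i p.2)) ∧
    (∀ s, IsLongLink3 (H s)) ∧ H 0 = f₀ ∧ H 1 = f₁

/-! ### Diagrams, crossings and Gauss diagram pairings -/

/-- All self-intersections of the projection of the long knot `f` are transverse
(any two branches meeting at a multiple point have independent projected tangents). -/
def TransverseK (f : ℝ → E3) : Prop :=
  ∀ t u, t ≠ u → pr12 (f t) = pr12 (f u) → cross2 (deriv f t) (deriv f u) ≠ 0

/-- The diagram of `f` has only transverse double points. -/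
def OnlyDoubleK (f : ℝ → E3) : Prop :=
  TransverseK f ∧
  ∀ t u v : ℝ, t ≠ u → u ≠ v → t ≠ v →
    pr12 (f t) = pr12 (f u) → pr12 (f u) = pr12 (f v) → False

/-- All self-intersections of the projection of the long link `f` are transverse. -/
def TransverseL (f : Fin 3 → ℝ → E3) : Prop :=
  ∀ i j s t, (i, s) ≠ (j, t) → pr12 (f i s) = pr12 (f j t) →
    cross2 (deriv (f i) s) (deriv (f j) t) ≠ 0

/-- The diagram of the long link `f` has only transverse double points. -/
def OnlyDoubleL (f : Fin 3 → ℝ → E3) : Prop :=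
  TransverseL f ∧
  ∀ i j k s t u, (i, s) ≠ (j, t) → (j, t) ≠ (k, u) → (i, s) ≠ (k, u) →
    pr12 (f i s) = pr12 (f j t) → pr12 (f j t) = pr12 (f k u) → False

/-- Crossings of a long knot diagram: pairs `(t, u)` with `t` on the lower and `u` on the
upper strand; the corresponding chord of the Gauss diagram is directed from `t` to `u`. -/
def CrossingK (f : ℝ → E3) : Set (ℝ × ℝ) :=
  {p | p.1 ≠ p.2 ∧ pr12 (f p.1) = pr12 (f p.2) ∧ pr3 (f p.1) < pr3 (f p.2)}

/-- The sign of the crossing `p = (t, u)` (`+1` iff the projected tangent of the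
over-strand followed by that of the under-strand is a positive basis of `N^⊥`). -/
def csignK (f : ℝ → E3) (p : ℝ × ℝ) : ℝ :=
  Real.sign (cross2 (deriv f p.2) (deriv f p.1))

/-- Gauss diagram pairing for a long knot: the sum, over all pairs of chords of the Gauss
diagram of `f` in the relative position prescribed by `R`, of the products of signs. -/
def pairK (f : ℝ → E3) (R : ℝ × ℝ → ℝ × ℝ → Prop) : ℝ :=
  ∑ᶠ q ∈ {q : (ℝ × ℝ) × (ℝ × ℝ) | q.1 ∈ CrossingK f ∧ q.2 ∈ CrossingK f ∧ R q.1 q.2},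
    csignK f q.1 * csignK f q.2

/-- `⟨X, G_D⟩` : chords `x₁ → x₃` and `x₄ → x₂` with `x₁ < x₂ < x₃ < x₄`. -/
def pairXK (f : ℝ → E3) : ℝ :=
  pairK f fun p q => p.1 < q.2 ∧ q.2 < p.2 ∧ p.2 < q.1

/-- `⟨X′₁, G_D⟩` : chords `a → b` and `c → a` with `a < b < c`. -/
def pairX1K (f : ℝ → E3) : ℝ :=
  pairK f fun p q => q.2 = p.1 ∧ p.1 < p.2 ∧ p.2 < q.1

/-- `⟨X′₂, G_D⟩` : chords `a → b` and `c → b` with `a < b < c`. -/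
def pairX2K (f : ℝ → E3) : ℝ :=
  pairK f fun p q => q.2 = p.2 ∧ p.1 < p.2 ∧ p.2 < q.1

/-- `⟨X′₃, G_D⟩` : chords `a → c` and `c → b` with `a < b < c`. -/
def pairX3K (f : ℝ → E3) : ℝ :=
  pairK f fun p q => p.2 = q.1 ∧ p.1 < q.2 ∧ q.2 < p.2

/-- Crossings of a 3-strand diagram between strand `i` (under) and strand `j` (over);
the corresponding chord is directed from `p.1` on strand `i` to `p.2` on strand `j`. -/
def CrossingL (f : Fin 3 → ℝ → E3) (i j : Fin 3) : Set (ℝ × ℝ) :=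
  {p | pr12 (f i p.1) = pr12 (f j p.2) ∧ pr3 (f i p.1) < pr3 (f j p.2)}

/-- The sign of the crossing `p` between strand `i` (under) and strand `j` (over). -/
def csignL (f : Fin 3 → ℝ → E3) (i j : Fin 3) (p : ℝ × ℝ) : ℝ :=
  Real.sign (cross2 (deriv (f j) p.2) (deriv (f i) p.1))

/-- Gauss diagram pairing for a 3-component long link. -/
def pairL (f : Fin 3 → ℝ → E3) (i₁ j₁ i₂ j₂ : Fin 3) (R : ℝ × ℝ → ℝ × ℝ → Prop) : ℝ :=
  ∑ᶠ q ∈ {q : (ℝ × ℝ) × (ℝ × ℝ) |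
      q.1 ∈ CrossingL f i₁ j₁ ∧ q.2 ∈ CrossingL f i₂ j₂ ∧ R q.1 q.2},
    csignL f i₁ j₁ q.1 * csignL f i₂ j₂ q.2

/-- `⟨𝒳₁, G_D⟩` : a chord from `t` on strand 1 to strand 2, and a chord from strand 3 to
`t′` on strand 1, with `t < t′`. -/
def pairL1 (f : Fin 3 → ℝ → E3) : ℝ := pairL f 0 1 2 0 fun p q => p.1 < q.2

/-- `⟨𝒳₂, G_D⟩` : a chord from strand 1 to `u` on strand 2, and a chord from strand 3 to
`u′` on strand 2, with `u < u′`. -/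
def pairL2 (f : Fin 3 → ℝ → E3) : ℝ := pairL f 0 1 2 1 fun p q => p.2 < q.2

/-- `⟨𝒳₃, G_D⟩` : a chord from strand 1 to `v` on strand 3, and a chord from `v′` on
strand 3 to strand 2, with `v < v′`. -/
def pairL3 (f : Fin 3 → ℝ → E3) : ℝ := pairL f 0 2 2 1 fun p q => p.2 < q.1

/-- `⟨𝒳′₁, G_D⟩` : as `𝒳₁` but with `t = t′` (a triple point). -/
def pairL1' (f : Fin 3 → ℝ → E3) : ℝ := pairL f 0 1 2 0 fun p q => p.1 = q.2

/-- `⟨𝒳′₂, G_D⟩` : as `𝒳₂` but with `u = u′` (a triple point). -/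
def pairL2' (f : Fin 3 → ℝ → E3) : ℝ := pairL f 0 1 2 1 fun p q => p.2 = q.2

/-- `⟨𝒳′₃, G_D⟩` : as `𝒳₃` but with `v = v′` (a triple point). -/
def pairL3' (f : Fin 3 → ℝ → E3) : ℝ := pairL f 0 2 2 1 fun p q => p.2 = q.1

/-! ### The localized unit 2-form `η` on `S²` -/

/-- The action of a 2×2 matrix on `ℝ³ = ℝ² × ℝ`, acting on the first two coordinates. -/
def act2 (A : Matrix (Fin 2) (Fin 2) ℝ) (v : E3) : E3 :=
  mk3 (A 0 0 * v 0 + A 0 1 * v 1) (A 1 0 * v 0 + A 1 1 * v 1) (v 2)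

/-- `IsEtaForm ε g` says that `η = g · (standard area form of S²)` is a smooth 2-form on
`S²` such that: (i) `supp η` lies in the `ε`-neighbourhood of the north pole `N`;
(ii) `φ*η = det φ · η` for every `φ ∈ O(2) ⊆ O(3)` (since `φ* (area form) = det φ ·
(area form)`, this amounts to `g ∘ φ = g`); (iii) `∫_{S²} η = 1`, i.e. the integral of
`g` against the surface measure of `S²` is `1`. -/
def IsEtaForm (ε : ℝ) (g : E3 → ℝ) : Prop :=
  ContDiff ℝ (⊤ : ℕ∞) g ∧
  (∀ v : E3, ‖v‖ = 1 → g v ≠ 0 → ‖v - NP‖ < ε) ∧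
  (∀ A : Matrix (Fin 2) (Fin 2) ℝ, A * A.transpose = 1 →
    ∀ v : E3, ‖v‖ = 1 → g (act2 A v) = g v) ∧
  ∫ v : Metric.sphere (0 : E3) 1, g v ∂((volume : Measure E3).toSphere) = 1

/-! ### Configuration space integrals -/

/-- `i`-th partial derivative of a map `ℝⁿ → ℝ³`. -/
def pdv {n : ℕ} (h : EuclideanSpace ℝ (Fin n) → E3) (i : Fin n)
    (x : EuclideanSpace ℝ (Fin n)) : E3 :=
  fderiv ℝ h x (EuclideanSpace.single i 1)

/-- The pullback `h*η` (for `η = g · (area form)`) evaluated at the point `x` on the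
coordinate vectors `(e_i, e_j)`. -/
def form2 {n : ℕ} (g : E3 → ℝ) (h : EuclideanSpace ℝ (Fin n) → E3)
    (x : EuclideanSpace ℝ (Fin n)) (i j : Fin n) : ℝ :=
  g (h x) * det3 (h x) (pdv h i x) (pdv h j x)

/-- `(h*η ∧ k*η)(e₀, e₁, e₂, e₃)` at `x`. -/
def wedge22 (g : E3 → ℝ) (h k : E4 → E3) (x : E4) : ℝ :=
  (1 / 4) * ∑ σ : Equiv.Perm (Fin 4),
    ((Equiv.Perm.sign σ : ℤ) : ℝ) * form2 g h x (σ 0) (σ 1) * form2 g k x (σ 2) (σ 3)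

/-- `(h*η ∧ k*η ∧ l*η)(e₀, …, e₅)` at `x`. -/
def wedge222 (g : E3 → ℝ) (h k l : E6 → E3) (x : E6) : ℝ :=
  (1 / 8) * ∑ σ : Equiv.Perm (Fin 6),
    ((Equiv.Perm.sign σ : ℤ) : ℝ) * form2 g h x (σ 0) (σ 1) * form2 g k x (σ 2) (σ 3) *
      form2 g l x (σ 4) (σ 5)

/-- The configuration space `C_X = {x₁ < x₂ < x₃ < x₄}`. -/
def CX : Set E4 := {x | x 0 < x 1 ∧ x 1 < x 2 ∧ x 2 < x 3}

/-- The integrand `ω_X = h₁₃*η ∧ h₄₂*η` for a long knot. -/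
def omegaX (f : ℝ → E3) (g : E3 → ℝ) : E4 → ℝ :=
  wedge22 g (fun x => unitv (f (x 2) - f (x 0))) (fun x => unitv (f (x 1) - f (x 3)))

/-- The configuration space integral `I_X(f)` of a long knot. -/
def IX (f : ℝ → E3) (g : E3 → ℝ) : ℝ := ∫ x in CX, omegaX f g x

/-- The free point `x₄ ∈ ℝ³` in a `Y`-configuration `(x₁,x₂,x₃;x₄) ∈ ℝ³ × ℝ³ = ℝ⁶`. -/
def ptY (x : E6) : E3 := mk3 (x 3) (x 4) (x 5)

/-- The configuration space `C_Y(f)` for a long knot. -/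
def CY (f : ℝ → E3) : Set E6 :=
  {x | x 0 < x 1 ∧ x 1 < x 2 ∧ ptY x ≠ f (x 0) ∧ ptY x ≠ f (x 1) ∧ ptY x ≠ f (x 2)}

/-- The integrand `ω_Y = h₁₄*η ∧ h₄₂*η ∧ h₃₄*η` for a long knot. -/
def omegaY (f : ℝ → E3) (g : E3 → ℝ) : E6 → ℝ :=
  wedge222 g (fun x => unitv (ptY x - f (x 0))) (fun x => unitv (f (x 1) - ptY x))
    (fun x => unitv (ptY x - f (x 2)))

/-- The configuration space integral `I_Y(f)` of a long knot. -/
def IY (f : ℝ → E3) (g : E3 → ℝ) : ℝ := ∫ x in CY f, omegaY f g x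

def CL1 : Set E4 := {x | x 0 < x 1}
def CL2 : Set E4 := {x | x 1 < x 2}
def CL3 : Set E4 := {x | x 2 < x 3}

/-- The integrand of `I_{𝒳₁}(f)` for a 3-component long link. -/
def omegaL1 (f : Fin 3 → ℝ → E3) (g : E3 → ℝ) : E4 → ℝ :=
  wedge22 g (fun x => unitv (f 1 (x 2) - f 0 (x 0))) (fun x => unitv (f 2 (x 3) - f 0 (x 1)))

/-- The integrand of `I_{𝒳₂}(f)` for a 3-component long link. -/
def omegaL2 (f : Fin 3 → ℝ → E3) (g : E3 → ℝ) : E4 → ℝ :=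
  wedge22 g (fun x => unitv (f 1 (x 1) - f 0 (x 0))) (fun x => unitv (f 1 (x 2) - f 2 (x 3)))

/-- The integrand of `I_{𝒳₃}(f)` for a 3-component long link. -/
def omegaL3 (f : Fin 3 → ℝ → E3) (g : E3 → ℝ) : E4 → ℝ :=
  wedge22 g (fun x => unitv (f 2 (x 2) - f 0 (x 0))) (fun x => unitv (f 1 (x 1) - f 2 (x 3)))

/-- The configuration space integral `I_{𝒳₁}(f)`. -/
def IL1 (f : Fin 3 → ℝ → E3) (g : E3 → ℝ) : ℝ := ∫ x in CL1, omegaL1 f g x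

/-- The configuration space integral `I_{𝒳₂}(f)`. -/
def IL2 (f : Fin 3 → ℝ → E3) (g : E3 → ℝ) : ℝ := ∫ x in CL2, omegaL2 f g x

/-- The configuration space integral `I_{𝒳₃}(f)`. -/
def IL3 (f : Fin 3 → ℝ → E3) (g : E3 → ℝ) : ℝ := ∫ x in CL3, omegaL3 f g x

/-- The configuration space `C_𝒴(f)` for a 3-component long link. -/
def CYL (f : Fin 3 → ℝ → E3) : Set E6 :=
  {x | ptY x ≠ f 0 (x 0) ∧ ptY x ≠ f 1 (x 1) ∧ ptY x ≠ f 2 (x 2)}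

/-- The integrand `ω_𝒴 = h₁₄*η ∧ h₄₂*η ∧ h₃₄*η` for a 3-component long link. -/
def omegaYL (f : Fin 3 → ℝ → E3) (g : E3 → ℝ) : E6 → ℝ :=
  wedge222 g (fun x => unitv (ptY x - f 0 (x 0))) (fun x => unitv (f 1 (x 1) - ptY x))
    (fun x => unitv (ptY x - f 2 (x 2)))

/-- The configuration space integral `I_𝒴(f)`. -/
def ILY (f : Fin 3 → ℝ → E3) (g : E3 → ℝ) : ℝ := ∫ x in CYL f, omegaYL f g x

/-! ### Model triple points -/

/-- The affine parametrization `t ↦ a + t • v` of a straight segment. -/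
def seg (a v : E3) (t : ℝ) : E3 := a + t • v

/-- A model triple point: three straight segments `S₁, S₂, S₃` (indexed by `0, 1, 2`),
`S_k` parametrized by `seg (a k) (v k) : (-δ, δ) → ℝ³`, all parallel to the plane
`N^⊥`, whose projections to `N^⊥` meet pairwise transversely at the single common point
which is the projection of each midpoint `a k`, and with `S₂` higher than `S₁`, `S₃`. -/
def IsModelTriple (a v : Fin 3 → E3) : Prop :=
  (∀ k, v k 2 = 0) ∧ (∀ k, v k ≠ 0) ∧
  pr12 (a 0) = pr12 (a 1) ∧ pr12 (a 1) = pr12 (a 2) ∧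
  (∀ j k, j ≠ k → cross2 (v j) (v k) ≠ 0) ∧
  a 0 2 < a 1 2 ∧ a 2 2 < a 1 2

/-- A model triple point of type `(←, s₁, s₂, s₃)`: `S₁` passes over `S₃`, and the signs
of the crossings `S₁–S₃`, `S₁–S₂`, `S₂–S₃` are `s₁, s₂, s₃` respectively. -/
def ModelLeft (a v : Fin 3 → E3) (s1 s2 s3 : ℝ) : Prop :=
  IsModelTriple a v ∧ a 2 2 < a 0 2 ∧
  s1 = Real.sign (cross2 (v 0) (v 2)) ∧
  s2 = Real.sign (cross2 (v 1) (v 0)) ∧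
  s3 = Real.sign (cross2 (v 1) (v 2))

/-- A model triple point of type `(→, s₁, s₂, s₃)`: `S₃` passes over `S₁`, and the signs
of the crossings `S₁–S₃`, `S₁–S₂`, `S₂–S₃` are `s₁, s₂, s₃` respectively. -/
def ModelRight (a v : Fin 3 → E3) (s1 s2 s3 : ℝ) : Prop :=
  IsModelTriple a v ∧ a 0 2 < a 2 2 ∧
  s1 = Real.sign (cross2 (v 2) (v 0)) ∧
  s2 = Real.sign (cross2 (v 1) (v 0)) ∧
  s3 = Real.sign (cross2 (v 1) (v 2))

/-- The cube `(-δ, δ)⁴ ⊆ ℝ⁴`. -/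
def cube4 (δ : ℝ) : Set E4 := {x | ∀ i, |x i| < δ}

/-- The model configuration space integral `I_X^{X′₁}`: the two points `t₁ < t₂` lie on
`S₁`, the point `t₃` on `S₂` and the point `t₄` on `S₃`; the maps are
`h₁₃ = unit (f₂(t₃) - f₁(t₁))` and `h₄₂ = unit (f₁(t₂) - f₃(t₄))`. -/
def IX1model (a v : Fin 3 → E3) (δ : ℝ) (g : E3 → ℝ) : ℝ :=
  ∫ x in cube4 δ ∩ {x : E4 | x 0 < x 1},
    wedge22 g (fun x => unitv (seg (a 1) (v 1) (x 2) - seg (a 0) (v 0) (x 0)))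
      (fun x => unitv (seg (a 0) (v 0) (x 1) - seg (a 2) (v 2) (x 3))) x

/-- The model configuration space integral `I_X^{X′₂}` (`(X′₂, l)` for a model of type
`←`, `(X′₂, r)` for a model of type `→`): the two points `t₂ < t₃` lie on `S₂`, the
point `t₁` on `S₁` and the point `t₄` on `S₃`; the maps are
`h₁₃ = unit (f₂(t₃) - f₁(t₁))` and `h₄₂ = unit (f₂(t₂) - f₃(t₄))`. -/
def IX2model (a v : Fin 3 → E3) (δ : ℝ) (g : E3 → ℝ) : ℝ :=
  ∫ x in cube4 δ ∩ {x : E4 | x 1 < x 2},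
    wedge22 g (fun x => unitv (seg (a 1) (v 1) (x 2) - seg (a 0) (v 0) (x 0)))
      (fun x => unitv (seg (a 1) (v 1) (x 1) - seg (a 2) (v 2) (x 3))) x

/-- The model configuration space integral `I_X^{X′₃}`: the two points `t₃ < t₄` lie on
`S₃`, the point `t₁` on `S₁` and the point `t₂` on `S₂`; the maps are
`h₁₃ = unit (f₃(t₃) - f₁(t₁))` and `h₄₂ = unit (f₂(t₂) - f₃(t₄))`. -/
def IX3model (a v : Fin 3 → E3) (δ : ℝ) (g : E3 → ℝ) : ℝ :=
  ∫ x in cube4 δ ∩ {x : E4 | x 2 < x 3},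
    wedge22 g (fun x => unitv (seg (a 2) (v 2) (x 2) - seg (a 0) (v 0) (x 0)))
      (fun x => unitv (seg (a 1) (v 1) (x 1) - seg (a 2) (v 2) (x 3))) x

/-- The model `Y`-integral `I_Y^{s₁,s₂,s₃}` over `(-δ,δ)³ × ℝ³`: the point `t_k` lies on
`S_k` and `x₄ ∈ ℝ³` is free; the maps are `h₁₄ = unit (x₄ - f₁(t₁))`,
`h₄₂ = unit (f₂(t₂) - x₄)` and `h₃₄ = unit (x₄ - f₃(t₃))`. -/
def IYmodel (a v : Fin 3 → E3) (δ : ℝ) (g : E3 → ℝ) : ℝ :=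
  ∫ x in {x : E6 | |x 0| < δ ∧ |x 1| < δ ∧ |x 2| < δ ∧
      ptY x ≠ seg (a 0) (v 0) (x 0) ∧ ptY x ≠ seg (a 1) (v 1) (x 1) ∧
      ptY x ≠ seg (a 2) (v 2) (x 2)},
    wedge222 g (fun x => unitv (ptY x - seg (a 0) (v 0) (x 0)))
      (fun x => unitv (seg (a 1) (v 1) (x 1) - ptY x))
      (fun x => unitv (ptY x - seg (a 2) (v 2) (x 2))) x

/-- Near every (triple or higher) multiple point of the diagram, the strands of the long
knot `f` are straight segments parallel to the plane `N^⊥`. -/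
def StraightNearMultipleK (f : ℝ → E3) : Prop :=
  ∀ t u v : ℝ, t ≠ u → u ≠ v → t ≠ v →
    pr12 (f t) = pr12 (f u) → pr12 (f u) = pr12 (f v) →
    ∃ δ > (0 : ℝ), ∃ w : E3, w 2 = 0 ∧ ∀ s : ℝ, |s - t| < δ → f s = f t + (s - t) • w

/-- Near every (triple or higher) multiple point of the diagram, the strands of the long
link `f` are straight segments parallel to the plane `N^⊥`. -/
def StraightNearMultipleL (f : Fin 3 → ℝ → E3) : Prop :=
  ∀ (i j k : Fin 3) (t u v : ℝ), (i, t) ≠ (j, u) → (j, u) ≠ (k, v) → (i, t) ≠ (k, v) →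
    pr12 (f i t) = pr12 (f j u) → pr12 (f j u) = pr12 (f k v) →
    ∃ δ > (0 : ℝ), ∃ w : E3, w 2 = 0 ∧ ∀ s : ℝ, |s - t| < δ → f i s = f i t + (s - t) • w

/-! ### Closed 2-component links and the linking number -/

/-- A smooth loop in `ℝ³`, parametrized with period 1 and injective on a period. -/
def IsLoop (f : ℝ → E3) : Prop :=
  ContDiff ℝ (⊤ : ℕ∞) f ∧ (∀ t, f (t + 1) = f t) ∧ (∀ t, deriv f t ≠ 0) ∧
    ∀ s t : ℝ, f s = f t → ∃ n : ℤ, t - s = n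

/-- The diagram of the 2-component link `(f 0, f 1)` has only transverse double points. -/
def OnlyDouble2 (f : Fin 2 → ℝ → E3) : Prop :=
  (∀ i j s t, f i s ≠ f j t → pr12 (f i s) = pr12 (f j t) →
      cross2 (deriv (f i) s) (deriv (f j) t) ≠ 0) ∧
  ∀ i j k s t u, f i s ≠ f j t → f j t ≠ f k u → f i s ≠ f k u →
    pr12 (f i s) = pr12 (f j t) → pr12 (f j t) = pr12 (f k u) → False

/-- The crossings of the diagram at which `f₂` passes over `f₁` (one parameter period). -/
def Crossing12 (f₁ f₂ : ℝ → E3) : Set (ℝ × ℝ) :=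
  {p | p.1 ∈ Ico (0 : ℝ) 1 ∧ p.2 ∈ Ico (0 : ℝ) 1 ∧
    pr12 (f₁ p.1) = pr12 (f₂ p.2) ∧ pr3 (f₁ p.1) < pr3 (f₂ p.2)}

/-- The sum of the signs of the crossings of the diagram at which `f₂` passes over `f₁`;
this is the linking number `lk(f₁, f₂)`, i.e. the mapping degree of
`h : S¹ × S¹ → S²`. -/
def lkSum (f₁ f₂ : ℝ → E3) : ℝ :=
  ∑ᶠ p ∈ Crossing12 f₁ f₂, Real.sign (cross2 (deriv f₂ p.2) (deriv f₁ p.1))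

/-- The fundamental domain `[0,1) × [0,1)` of `S¹ × S¹`. -/
def sq01 : Set E2 := {x | x 0 ∈ Ico (0 : ℝ) 1 ∧ x 1 ∈ Ico (0 : ℝ) 1}

/-- `∫_{S¹×S¹} h*η` for `h(x₁,x₂) = unit (f₂(x₂) - f₁(x₁))`. -/
def lkIntegral (f₁ f₂ : ℝ → E3) (g : E3 → ℝ) : ℝ :=
  ∫ x in sq01, form2 g (fun x : E2 => unitv (f₂ (x 1) - f₁ (x 0))) x 0 1

/-!
Since `η` is concentrated near `N`, the integrands live where the chords `f x₃ - f x₁` and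
`f x₂ - f x₄` are nearly vertical. As `ε → 0` such configurations accumulate only at pairs of
crossings in the order of `X`, up to coincidences of neighbouring endpoints: this is a compactness
argument, in which transversality and the ordering exclude chords degenerating to tangent vectors.
At a crossing the direction of the chord, in gnomonic coordinates, is a local diffeomorphism, so
`∫ η = 1` turns the crossing into its sign. A pair of crossings with distinct endpoints thus
contributes the product of its signs to `I_X`. A pair sharing an endpoint lies on exactly one wall
of `C_X`; the strands at its multiple point are symmetric under the half-turn about the vertical
axis, so exactly half of the product lies on the correct side of the wall. The integral `I_Y` is
concentrated near multiple points, where the same half-turn induces an orientation-reversing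
symmetry of the configuration space (five coordinates of `ℝ⁶` change sign) under which the
pullback of `η` is invariant, so the integral is its own negative.
-/

/-! ### Euclidean 3-space -/

@[simp] lemma mk3_apply_zero (x y z : ℝ) : mk3 x y z 0 = x := rfl
@[simp] lemma mk3_apply_one (x y z : ℝ) : mk3 x y z 1 = y := rfl
@[simp] lemma mk3_apply_two (x y z : ℝ) : mk3 x y z 2 = z := rfl

lemma E3_ext {u v : E3} (h0 : u 0 = v 0) (h1 : u 1 = v 1) (h2 : u 2 = v 2) : u = v := by
  ext i; fin_cases i <;> assumption

lemma E3_norm_sq (d : E3) : ‖d‖ ^ 2 = d 0 ^ 2 + d 1 ^ 2 + d 2 ^ 2 := by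
  rw [EuclideanSpace.real_norm_sq_eq, Fin.sum_univ_three]

lemma norm_unitv {d : E3} (hd : d ≠ 0) : ‖unitv d‖ = 1 :=
  norm_smul_inv_norm (𝕜 := ℝ) hd

lemma unitv_smul {r : ℝ} (hr : 0 < r) (d : E3) : unitv (r • d) = unitv d := by
  rw [unitv, unitv, norm_smul, Real.norm_of_nonneg hr.le, smul_smul]
  congr 1
  field_simp

lemma unitv_map (R : E3 ≃ₗᵢ[ℝ] E3) (d : E3) : unitv (R d) = R (unitv d) := by
  simp [unitv]

/-- `IsSteep ε d`: the vector `d` lies in the closed cone of directions making an angle at most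
`arccos (1 - ε)` with the vertical. -/
def IsSteep (ε : ℝ) (d : E3) : Prop := (1 - ε) * ‖d‖ ≤ d 2

namespace IsSteep

lemma add {ε : ℝ} (hε : ε ≤ 1) {d e : E3} (hd : IsSteep ε d) (he : IsSteep ε e) :
    IsSteep ε (d + e) :=
  calc (1 - ε) * ‖d + e‖ ≤ (1 - ε) * (‖d‖ + ‖e‖) :=
        mul_le_mul_of_nonneg_left (norm_add_le d e) (sub_nonneg.2 hε)
    _ ≤ d 2 + e 2 := by rw [mul_add]; exact add_le_add hd he

lemma of_norm_unitv_sub_lt {ε : ℝ} {d : E3} (hd : d ≠ 0) (h : ‖unitv d - NP‖ < ε) :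
    IsSteep ε d := by
  have hz : |‖d‖⁻¹ * d 2 - 1| < ε := (PiLp.norm_apply_le (unitv d - NP) 2).trans_lt h
  have hle : 1 - ε ≤ ‖d‖⁻¹ * d 2 := by linarith [(abs_lt.1 hz).1]
  calc (1 - ε) * ‖d‖ ≤ ‖d‖⁻¹ * d 2 * ‖d‖ := mul_le_mul_of_nonneg_right hle (norm_nonneg d)
    _ = d 2 := by field_simp [norm_ne_zero_iff.2 hd]

lemma of_etaForm_ne_zero {ε : ℝ} {g : E3 → ℝ} (hg : IsEtaForm ε g) {d : E3} (hd : d ≠ 0)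
    (h : g (unitv d) ≠ 0) : IsSteep ε d :=
  of_norm_unitv_sub_lt hd (hg.2.1 _ (norm_unitv hd) h)

lemma smul {ε r : ℝ} (hr : 0 ≤ r) {d : E3} (hd : IsSteep ε d) : IsSteep ε (r • d) :=
  calc (1 - ε) * ‖r • d‖ = r * ((1 - ε) * ‖d‖) := by rw [norm_smul, Real.norm_of_nonneg hr]; ring
    _ ≤ r * d 2 := mul_le_mul_of_nonneg_left hd hr

lemma pos {ε : ℝ} (hε : ε < 1) {d : E3} (hd : IsSteep ε d) (h0 : d ≠ 0) : 0 < d 2 :=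
  (mul_pos (sub_pos.2 hε) (norm_pos_iff.2 h0)).trans_le hd

lemma of_tendsto {ι : Type*} {l : Filter ι} [l.NeBot] {ε : ι → ℝ} {d : ι → E3} {ε₀ : ℝ} {d₀ : E3}
    (hε : Tendsto ε l (𝓝 ε₀)) (hd : Tendsto d l (𝓝 d₀)) (h : ∀ᶠ n in l, IsSteep (ε n) (d n)) :
    IsSteep ε₀ d₀ :=
  le_of_tendsto_of_tendsto ((hε.const_sub 1).mul hd.norm)
    (((EuclideanSpace.proj 2 : E3 →L[ℝ] ℝ).continuous.tendsto d₀).comp hd) h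

end IsSteep

lemma isSteep_zero_iff {d : E3} : IsSteep 0 d ↔ d 0 = 0 ∧ d 1 = 0 ∧ 0 ≤ d 2 := by
  have hnorm := E3_norm_sq d
  rw [IsSteep, sub_zero, one_mul]
  constructor
  · intro h
    have hsq : ‖d‖ ^ 2 ≤ d 2 ^ 2 := pow_le_pow_left₀ (norm_nonneg d) h 2
    refine ⟨?_, ?_, (norm_nonneg d).trans h⟩ <;> nlinarith [sq_nonneg (d 0), sq_nonneg (d 1)]
  · rintro ⟨h0, h1, h2⟩
    exact le_of_sq_le_sq (by simp [hnorm, h0, h1]) h2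

/-! ### Sign changes of the coordinates -/

/-- The linear isometry of `ℝⁿ` which multiplies the `i`-th coordinate by the sign `s i`. -/
def axisFlip {n : ℕ} (s : Fin n → ℤˣ) : EuclideanSpace ℝ (Fin n) ≃ₗᵢ[ℝ] EuclideanSpace ℝ (Fin n) :=
  LinearIsometryEquiv.piLpCongrRight 2 fun i =>
    if s i = 1 then LinearIsometryEquiv.refl ℝ ℝ else LinearIsometryEquiv.neg ℝ

lemma axisFlip_apply {n : ℕ} (s : Fin n → ℤˣ) (v : EuclideanSpace ℝ (Fin n)) (i : Fin n) :
    axisFlip s v i = (s i : ℤ) * v i := by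
  rcases Int.units_eq_one_or (s i) with h | h <;>
    simp [axisFlip, LinearIsometryEquiv.piLpCongrRight_apply, h]

lemma axisFlip_single {n : ℕ} (s : Fin n → ℤˣ) (i : Fin n) :
    axisFlip s (EuclideanSpace.single i 1) = ((s i : ℤ) : ℝ) • EuclideanSpace.single i 1 := by
  ext j
  rw [axisFlip_apply]
  by_cases h : j = i <;> simp [h, PiLp.single_apply]

/-- The half-turn of `ℝ³` about the vertical axis. -/
def halfTurn : E3 ≃ₗᵢ[ℝ] E3 := axisFlip ![-1, -1, 1]

@[simp] lemma halfTurn_apply_zero (v : E3) : halfTurn v 0 = -v 0 := by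
  simp [halfTurn, axisFlip_apply]

@[simp] lemma halfTurn_apply_one (v : E3) : halfTurn v 1 = -v 1 := by
  simp [halfTurn, axisFlip_apply]

@[simp] lemma halfTurn_apply_two (v : E3) : halfTurn v 2 = v 2 := by
  simp [halfTurn, axisFlip_apply]

lemma halfTurn_eq_self {v : E3} (h0 : v 0 = 0) (h1 : v 1 = 0) : halfTurn v = v := by
  apply E3_ext <;> simp [h0, h1]

lemma halfTurn_eq_neg {v : E3} (h2 : v 2 = 0) : halfTurn v = -v := by
  apply E3_ext <;> simp [h2]

lemma det3_halfTurn (u v w : E3) : det3 (halfTurn u) (halfTurn v) (halfTurn w) = det3 u v w := by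
  simp only [det3, halfTurn_apply_zero, halfTurn_apply_one, halfTurn_apply_two]; ring

lemma IsEtaForm.apply_unitv_halfTurn {ε : ℝ} {g : E3 → ℝ} (hg : IsEtaForm ε g) (d : E3) :
    g (unitv (halfTurn d)) = g (unitv d) := by
  rcases eq_or_ne d 0 with rfl | hd
  · simp
  have hact : act2 (-1) (unitv d) = halfTurn (unitv d) := by apply E3_ext <;> simp [act2]
  rw [unitv_map, ← hact, hg.2.2.1 (-1) (by simp) _ (norm_unitv hd)]

/-! ### Pullbacks of the area form -/

lemma form2_unitv {n : ℕ} (g : E3 → ℝ) {D : EuclideanSpace ℝ (Fin n) → E3}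
    {x : EuclideanSpace ℝ (Fin n)} (hD : DifferentiableAt ℝ D x) (h0 : D x ≠ 0) (i j : Fin n) :
    form2 g (fun y => unitv (D y)) x i j =
      g (unitv (D x)) * (‖D x‖⁻¹ ^ 3 * det3 (D x) (pdv D i x) (pdv D j x)) := by
  have hinv : DifferentiableAt ℝ (fun y => ‖D y‖⁻¹) x :=
    (hD.norm ℝ h0).inv (norm_ne_zero_iff.2 h0)
  have hpdv (k : Fin n) : pdv (fun y => unitv (D y)) k x = ‖D x‖⁻¹ • pdv D k x +
      fderiv ℝ (fun y => ‖D y‖⁻¹) x (EuclideanSpace.single k 1) • D x := by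
    simp [pdv, unitv, fderiv_fun_smul hinv hD]
  rw [form2, hpdv i, hpdv j]
  simp only [det3, unitv, PiLp.add_apply, PiLp.smul_apply, smul_eq_mul]
  ring

lemma form2_swap {n : ℕ} (g : E3 → ℝ) (h : EuclideanSpace ℝ (Fin n) → E3)
    (x : EuclideanSpace ℝ (Fin n)) (i j : Fin n) : form2 g h x j i = -form2 g h x i j := by
  simp only [form2, det3]; ring

lemma hasFDerivAt_comp_coord {n : ℕ} {f : ℝ → E3} {k : Fin n} {x : EuclideanSpace ℝ (Fin n)}
    (hf : DifferentiableAt ℝ f (x k)) :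
    HasFDerivAt (fun y : EuclideanSpace ℝ (Fin n) => f (y k))
      ((EuclideanSpace.proj k : EuclideanSpace ℝ (Fin n) →L[ℝ] ℝ).smulRight (deriv f (x k))) x := by
  have hk : HasFDerivAt (fun y : EuclideanSpace ℝ (Fin n) => y k)
      (EuclideanSpace.proj k : EuclideanSpace ℝ (Fin n) →L[ℝ] ℝ) x :=
    (EuclideanSpace.proj k : EuclideanSpace ℝ (Fin n) →L[ℝ] ℝ).hasFDerivAt
  exact (hf.hasDerivAt.hasFDerivAt.comp x hk).congr_fderiv (by ext v; simp)

lemma pdv_sub_comp_coord {n : ℕ} {f : ℝ → E3} {k l : Fin n} {x : EuclideanSpace ℝ (Fin n)}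
    (hk : DifferentiableAt ℝ f (x k)) (hl : DifferentiableAt ℝ f (x l)) (i : Fin n) :
    pdv (fun y : EuclideanSpace ℝ (Fin n) => f (y k) - f (y l)) i x =
      (if k = i then 1 else 0 : ℝ) • deriv f (x k) -
        (if l = i then 1 else 0 : ℝ) • deriv f (x l) := by
  rw [pdv, ((hasFDerivAt_comp_coord hk).fun_sub (hasFDerivAt_comp_coord hl)).fderiv]
  simp [PiLp.single_apply]

lemma sum_perm_fin_succ {n : ℕ} {M : Type*} [AddCommMonoid M] (F : Equiv.Perm (Fin (n + 1)) → M) :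
    ∑ σ, F σ = ∑ i, ∑ τ, F (Equiv.Perm.decomposeFin.symm (i, τ)) := by
  rw [← Equiv.Perm.decomposeFin.symm.sum_comp, Fintype.sum_prod_type]

lemma wedge22_eq (g : E3 → ℝ) (h k : E4 → E3) (x : E4) :
    wedge22 g h k x =
      form2 g h x 0 1 * form2 g k x 2 3 - form2 g h x 0 2 * form2 g k x 1 3 +
      form2 g h x 0 3 * form2 g k x 1 2 + form2 g h x 1 2 * form2 g k x 0 3 -
      form2 g h x 1 3 * form2 g k x 0 2 + form2 g h x 2 3 * form2 g k x 0 1 := by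
  have hM := form2_swap g h x
  have hN := form2_swap g k x
  unfold wedge22
  generalize form2 g h x = M at *
  generalize form2 g k x = N at *
  simp_rw [sum_perm_fin_succ, Equiv.Perm.decomposeFin.symm_sign]
  simp only [Fin.sum_univ_four, Fin.sum_univ_three, Fin.sum_univ_two, Fintype.sum_unique,
    show (1 : Fin 4) = Fin.succ 0 from rfl, show (2 : Fin 4) = Fin.succ 1 from rfl,
    show (3 : Fin 4) = Fin.succ 2 from rfl, show (1 : Fin 3) = Fin.succ 0 from rfl,
    show (2 : Fin 3) = Fin.succ 1 from rfl, show (1 : Fin 2) = Fin.succ 0 from rfl,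
    Equiv.Perm.decomposeFin_symm_apply_succ, Equiv.Perm.decomposeFin_symm_apply_zero]
  simp only [↓reduceIte, Nat.reduceAdd, Nat.succ_eq_add_one, Fin.default_eq_zero, Fin.isValue,
    Equiv.Perm.default_eq, Equiv.Perm.sign_one, mul_one, Units.val_one, Int.cast_one,
    Equiv.swap_self, Fin.succ_zero_eq_one', Equiv.refl_apply, one_mul, Fin.succ_one_eq_two',
    Fin.reduceSucc, one_ne_zero, mul_neg, Units.val_neg, Int.reduceNeg, Int.cast_neg, neg_mul,
    Equiv.swap_apply_right, Equiv.swap_apply_def, Fin.reduceEq, neg_neg]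
  rw [hM 0 1, hM 0 2, hM 0 3, hM 1 2, hM 1 3, hM 2 3, hN 0 1, hN 0 2, hN 0 3, hN 1 2, hN 1 3,
    hN 2 3]
  ring

/-- The triple product of the chord `f t - f s` and its partial derivatives in `s` and `t`: the
Jacobian determinant of the direction map of the chords of `f`, up to a positive factor. -/
def chordDet (f : ℝ → E3) (p : ℝ × ℝ) : ℝ :=
  det3 (f p.2 - f p.1) (-deriv f p.1) (deriv f p.2)

/-- The density of the pullback of `η = g · (area form)` under the direction map
`(s, t) ↦ unitv (f t - f s)` of the chords of `f`. -/
def chordDensity (f : ℝ → E3) (g : E3 → ℝ) (p : ℝ × ℝ) : ℝ :=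
  g (unitv (f p.2 - f p.1)) * (‖f p.2 - f p.1‖⁻¹ ^ 3 * chordDet f p)

lemma form2_chord {n : ℕ} {f : ℝ → E3} (hf : Differentiable ℝ f) (g : E3 → ℝ) {k l : Fin n}
    {x : EuclideanSpace ℝ (Fin n)} (h : f (x k) ≠ f (x l)) (i j : Fin n) :
    form2 g (fun y : EuclideanSpace ℝ (Fin n) => unitv (f (y k) - f (y l))) x i j =
      chordDensity f g (x l, x k) * (((if l = i then 1 else 0) * (if k = j then 1 else 0)) -
        ((if k = i then 1 else 0) * (if l = j then 1 else 0))) := by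
  have hD : DifferentiableAt ℝ (fun y : EuclideanSpace ℝ (Fin n) => f (y k) - f (y l)) x :=
    ((hasFDerivAt_comp_coord (hf _)).sub (hasFDerivAt_comp_coord (hf _))).differentiableAt
  rw [form2_unitv g hD (sub_ne_zero.2 h), pdv_sub_comp_coord (hf _) (hf _),
    pdv_sub_comp_coord (hf _) (hf _)]
  simp only [chordDensity, chordDet, det3, PiLp.sub_apply, PiLp.neg_apply, PiLp.smul_apply,
    smul_eq_mul]
  ring

lemma omegaX_eq {f : ℝ → E3} (hf : Differentiable ℝ f) (g : E3 → ℝ) {x : E4}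
    (h02 : f (x 2) ≠ f (x 0)) (h31 : f (x 1) ≠ f (x 3)) :
    omegaX f g x = chordDensity f g (x 0, x 2) * chordDensity f g (x 3, x 1) := by
  simp [omegaX, wedge22_eq, form2_chord hf g h02, form2_chord hf g h31]

/-! ### Gnomonic coordinates -/

lemma measurePreserving_of_volume_preimage_box {α : Type*} [MeasureSpace α] {n : ℕ}
    {F : α → EuclideanSpace ℝ (Fin n)} (hF : Measurable F)
    (hbox : ∀ s : Fin n → Set ℝ, (∀ i, MeasurableSet (s i)) →
      volume (F ⁻¹' {x | ∀ i, x i ∈ s i}) = ∏ i, volume (s i)) :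
    MeasurePreserving F := by
  have hpi : MeasurePreserving (fun a => WithLp.ofLp (F a)) volume volume := by
    refine ⟨by fun_prop, Eq.symm (Measure.pi_eq fun s hs => ?_)⟩
    rw [Measure.map_apply (by fun_prop) (MeasurableSet.univ_pi hs), ← hbox s hs]
    simp [preimage, Set.pi]
  exact (PiLp.volume_preserving_toLp (Fin n)).comp hpi

/-- The splitting of `ℝ³` into its horizontal and its vertical coordinates. -/
def horizontalVertical : (ℝ × ℝ) × ℝ ≃ᵐ E3 where
  toFun w := mk3 w.1.1 w.1.2 w.2
  invFun x := ((x 0, x 1), x 2)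
  left_inv _ := rfl
  right_inv _ := E3_ext rfl rfl rfl
  measurable_toFun := (MeasurableEquiv.toLp 2 (Fin 3 → ℝ)).measurable.comp <|
    show Measurable fun w : (ℝ × ℝ) × ℝ => ![w.1.1, w.1.2, w.2] from
      measurable_pi_iff.2 (Fin.forall_fin_succ.2 ⟨by fun_prop, Fin.forall_fin_two.2
        ⟨by fun_prop, by fun_prop⟩⟩)
  measurable_invFun :=
    show Measurable fun x : E3 => ((x 0, x 1), x 2) by fun_prop

lemma horizontalVertical_apply (w : (ℝ × ℝ) × ℝ) :
    horizontalVertical w = mk3 w.1.1 w.1.2 w.2 := rfl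

lemma measurePreserving_horizontalVertical : MeasurePreserving horizontalVertical := by
  refine measurePreserving_of_volume_preimage_box horizontalVertical.measurable fun s _ => ?_
  have hpre : horizontalVertical ⁻¹' {x | ∀ i, x i ∈ s i} = (s 0 ×ˢ s 1) ×ˢ s 2 := by
    ext; simp [horizontalVertical_apply, Fin.forall_fin_succ, and_assoc]
  rw [hpre, Measure.volume_eq_prod, Measure.prod_prod, Measure.volume_eq_prod, Measure.prod_prod,
    Fin.prod_univ_three]

/-- The density of `g · (area form)` on the upper hemisphere in the gnomonic coordinates
`y ↦ unitv (y, 1)`. -/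
def gnomonicDensity (g : E3 → ℝ) (y : ℝ × ℝ) : ℝ :=
  g (unitv (mk3 y.1 y.2 1)) * ‖mk3 y.1 y.2 1‖⁻¹ ^ 3

/-- The function on the slab `0 < z < 1` which is homogeneous of degree `0` and restricts to
`v ↦ g v * (v 2) ^ 3` on the sphere. The cube is the reciprocal of the volume that the slab cuts out
of a cone around `v`, so that integrating in polar coordinates gives `∫ g / 3`. -/
def slabExtension (g : E3 → ℝ) (x : E3) : ℝ :=
  if x 2 ∈ Ioo 0 1 then g (unitv x) * unitv x 2 ^ 3 else 0

section Gnomonic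

variable {g : E3 → ℝ} {c : ℝ}

lemma integrable_slabExtension (hg : Continuous g) (hc : 0 < c)
    (hsupp : ∀ v, ‖v‖ = 1 → g v ≠ 0 → c ≤ v 2) : Integrable (slabExtension g) := by
  obtain ⟨M, hM⟩ := (isCompact_closedBall (0 : E3) 1).exists_bound_of_continuousOn hg.continuousOn
  have hunitv : Measurable unitv := by unfold unitv; fun_prop
  have hmeas : Measurable (slabExtension g) :=
    Measurable.ite (measurableSet_Ioo.preimage (show Measurable fun x : E3 => x 2 by fun_prop))
      (by fun_prop) measurable_const
  have hbound : IntegrableOn (fun _ : E3 => M) (Metric.ball 0 c⁻¹) :=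
    integrableOn_const measure_ball_lt_top.ne
  refine (hbound.integrable_indicator measurableSet_ball).mono' hmeas.aestronglyMeasurable
    (Eventually.of_forall fun x => ?_)
  by_cases hx : x 2 ∈ Ioo 0 1
  · have hx0 : x ≠ 0 := by rintro rfl; simp at hx
    have hMx := hM (unitv x) (by simp [norm_unitv hx0])
    have hle : |unitv x 2| ≤ 1 := (PiLp.norm_apply_le (unitv x) 2).trans (norm_unitv hx0).le
    rw [slabExtension, if_pos hx]
    rcases eq_or_ne (g (unitv x)) 0 with h0 | h0
    · simpa [h0] using indicator_nonneg (fun _ _ => (norm_nonneg _).trans hMx) x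
    · have hcx : c * ‖x‖ ≤ x 2 := by
        have := mul_le_mul_of_nonneg_right (hsupp _ (norm_unitv hx0) h0) (norm_nonneg x)
        rwa [unitv, PiLp.smul_apply, smul_eq_mul, inv_mul_eq_div,
          div_mul_cancel₀ _ (norm_ne_zero_iff.2 hx0)] at this
      have hball : x ∈ Metric.ball 0 c⁻¹ := by
        rw [mem_ball_zero_iff, ← one_div, lt_div_iff₀' hc]
        exact hcx.trans_lt hx.2
      rw [indicator_of_mem hball, norm_mul, norm_pow, Real.norm_eq_abs (unitv x 2)]
      exact (mul_le_of_le_one_right (norm_nonneg _) (pow_le_one₀ (abs_nonneg _) hle)).trans hMx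
  · simpa [slabExtension, hx] using
      indicator_nonneg (fun _ _ => (norm_nonneg _).trans (hM 0 (by simp))) x

lemma integral_slabExtension_ray {v : E3} (hv : g v ≠ 0 → 0 < v 2) :
    ∫ r : Ioi (0 : ℝ), (if r.1 * v 2 ∈ Ioo 0 1 then g v * v 2 ^ 3 else 0) ∂Measure.volumeIoiPow 2 =
      (1 / 3) * g v := by
  rcases eq_or_ne (g v) 0 with h0 | h0
  · simp [h0]
  have hpos := hv h0
  let top : Ioi (0 : ℝ) := ⟨(v 2)⁻¹, mem_Ioi.2 (inv_pos.2 hpos)⟩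
  have hind : (fun r : Ioi (0 : ℝ) => if r.1 * v 2 ∈ Ioo 0 1 then g v * v 2 ^ 3 else 0) =
      (Iio top).indicator fun _ => g v * v 2 ^ 3 := by
    ext r
    have hr : r.1 * v 2 < 1 ↔ r < top := by
      rw [← Subtype.coe_lt_coe, lt_inv_comm₀ r.2 hpos, ← one_div, lt_div_iff₀' r.2]
    simp only [indicator, mem_Iio, mem_Ioo, mul_pos r.2.out hpos, true_and, hr]
  rw [hind, integral_indicator_const _ measurableSet_Iio, Measure.real,
    Measure.volumeIoiPow_apply_Iio, ENNReal.toReal_ofReal (by positivity), smul_eq_mul, inv_pow]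
  field_simp
  norm_num [hpos.ne']

lemma integral_slabExtension_polar (hg : Continuous g) (hc : 0 < c)
    (hsupp : ∀ v, ‖v‖ = 1 → g v ≠ 0 → c ≤ v 2) :
    ∫ x, slabExtension g x =
      (1 / 3) * ∫ v : Metric.sphere (0 : E3) 1, g v ∂(volume : Measure E3).toSphere := by
  have hpolar := (volume : Measure E3).measurePreserving_homeomorphUnitSphereProd
  have hemb := (homeomorphUnitSphereProd E3).measurableEmbedding
  let H : Metric.sphere (0 : E3) 1 × Ioi (0 : ℝ) → ℝ := fun p =>
    if p.2.1 * p.1.1 2 ∈ Ioo 0 1 then g p.1 * p.1.1 2 ^ 3 else 0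
  have hcomp : H ∘ homeomorphUnitSphereProd E3 = slabExtension g ∘ Subtype.val := by
    ext x
    simp [H, slabExtension, unitv, norm_ne_zero_iff.2 x.2]
  have hint : Integrable H ((volume : Measure E3).toSphere.prod (.volumeIoiPow 2)) := by
    have hsub : Integrable (slabExtension g ∘ Subtype.val)
        ((volume : Measure E3).comap (Subtype.val : ({0}ᶜ : Set E3) → E3)) :=
      (integrableOn_iff_comap_subtypeVal (measurableSet_singleton _).compl).1
        (integrable_slabExtension hg hc hsupp).integrableOn
    rw [← hcomp] at hsub
    simpa using (hpolar.integrable_comp_emb hemb).1 hsub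
  calc ∫ x, slabExtension g x
      = ∫ x : ({0}ᶜ : Set E3), H (homeomorphUnitSphereProd E3 x)
          ∂(volume : Measure E3).comap Subtype.val := by
        conv_lhs => rw [← restrict_compl_singleton (μ := volume) (0 : E3),
          ← integral_subtype_comap (measurableSet_singleton _).compl]
        exact integral_congr_ae (Eventually.of_forall fun x => (congrFun hcomp x).symm)
    _ = ∫ p, H p ∂(volume : Measure E3).toSphere.prod (.volumeIoiPow 2) := by
        simpa using hpolar.integral_comp hemb H
    _ = ∫ v : Metric.sphere (0 : E3) 1, (1 / 3) * g v ∂(volume : Measure E3).toSphere := by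
        rw [integral_prod _ hint]
        exact integral_congr_ae <| Eventually.of_forall fun v => integral_slabExtension_ray
          fun h => hc.trans_le (hsupp v (by simp) h)
    _ = _ := integral_const_mul _ _

lemma integral_slabExtension_slice {z : ℝ} (hz : z ∈ Ioo (0 : ℝ) 1) :
    ∫ w : ℝ × ℝ, slabExtension g (mk3 w.1 w.2 z) = z ^ 2 * ∫ y, gnomonicDensity g y := by
  have hdilate (y : ℝ × ℝ) :
      slabExtension g (mk3 (z • y).1 (z • y).2 z) = gnomonicDensity g y := by
    have hsmul : mk3 (z • y).1 (z • y).2 z = z • mk3 y.1 y.2 1 := by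
      apply E3_ext <;> simp
    rw [slabExtension, if_pos (by simpa using hz), hsmul, unitv_smul hz.1]
    simp [gnomonicDensity, unitv]
  have hscale := Measure.integral_comp_smul volume
    (fun w : ℝ × ℝ => slabExtension g (mk3 w.1 w.2 z)) z
  simp only [hdilate, Module.finrank_prod, Module.finrank_self, smul_eq_mul,
    abs_of_pos (inv_pos.2 (pow_pos hz.1 _))] at hscale
  rw [hscale, mul_inv_cancel_left₀ (pow_pos hz.1 2).ne']

lemma integral_slabExtension_slices (hint : Integrable (slabExtension g)) :
    ∫ x, slabExtension g x = (1 / 3) * ∫ y, gnomonicDensity g y := by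
  have hslice (z : ℝ) : ∫ w : ℝ × ℝ, slabExtension g (mk3 w.1 w.2 z) =
      (Ioo (0 : ℝ) 1).indicator (fun z => z ^ 2 * ∫ y, gnomonicDensity g y) z := by
    by_cases hz : z ∈ Ioo (0 : ℝ) 1
    · rw [integral_slabExtension_slice hz, indicator_of_mem hz]
    · simp [slabExtension, hz]
  have hHV := measurePreserving_horizontalVertical
  have hemb := horizontalVertical.measurableEmbedding
  calc ∫ x, slabExtension g x
      = ∫ z : ℝ, ∫ w : ℝ × ℝ, slabExtension g (mk3 w.1 w.2 z) := by
        rw [← hHV.integral_comp hemb, Measure.volume_eq_prod,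
          integral_prod_symm (fun w => slabExtension g (horizontalVertical w))
            ((hHV.integrable_comp_emb hemb).2 hint)]
        rfl
    _ = ∫ z in (0 : ℝ)..1, z ^ 2 * ∫ y, gnomonicDensity g y := by
        simp_rw [hslice]
        rw [integral_indicator measurableSet_Ioo, intervalIntegral.integral_of_le zero_le_one,
          integral_Ioc_eq_integral_Ioo]
    _ = _ := by rw [intervalIntegral.integral_mul_const, integral_pow]; norm_num

lemma integral_gnomonicDensity (hg : Continuous g) (hc : 0 < c)
    (hsupp : ∀ v, ‖v‖ = 1 → g v ≠ 0 → c ≤ v 2) :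
    ∫ y, gnomonicDensity g y =
      ∫ v : Metric.sphere (0 : E3) 1, g v ∂(volume : Measure E3).toSphere := by
  have hpolar := integral_slabExtension_polar hg hc hsupp
  rw [integral_slabExtension_slices (integrable_slabExtension hg hc hsupp)] at hpolar
  linarith

end Gnomonic

lemma IsEtaForm.integral_gnomonicDensity {ε : ℝ} (hε : ε < 1) {g : E3 → ℝ}
    (hg : IsEtaForm ε g) : ∫ y, gnomonicDensity g y = 1 := by
  rw [_root_.integral_gnomonicDensity hg.1.continuous (sub_pos.2 hε) fun v hv hgv => ?_]
  · exact hg.2.2.2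
  · have hv0 : v ≠ 0 := by rintro rfl; simp at hv
    have hsteep := IsSteep.of_etaForm_ne_zero hg hv0 (by simpa [unitv, hv] using hgv)
    simpa [IsSteep, hv] using hsteep

/-! ### The degree of the chord direction map at a crossing -/

lemma gnomonicDensity_support {ε : ℝ} (hε : ε ≤ 1 / 2) {g : E3 → ℝ} (hg : IsEtaForm ε g)
    {y : ℝ × ℝ} (hy : gnomonicDensity g y ≠ 0) : ‖y‖ ^ 2 ≤ 8 * ε := by
  set d := mk3 y.1 y.2 1
  have hnorm : ‖d‖ ^ 2 = y.1 ^ 2 + y.2 ^ 2 + 1 := by simp [E3_norm_sq, d]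
  have hd : d ≠ 0 := fun h => by simpa [d] using congrArg (fun v : E3 => v 2) h
  have hsteep : (1 - ε) * ‖d‖ ≤ 1 := IsSteep.of_etaForm_ne_zero hg hd (left_ne_zero_of_mul hy)
  have hd1 : 1 ≤ ‖d‖ := by nlinarith [norm_nonneg d, sq_nonneg y.1, sq_nonneg y.2]
  have : ‖d‖ ≤ 2 := by nlinarith
  have hsum : y.1 ^ 2 + y.2 ^ 2 ≤ 8 * ε := by nlinarith
  rw [Prod.norm_def]
  rcases max_choice ‖y.1‖ ‖y.2‖ with h | h <;> rw [h, Real.norm_eq_abs, sq_abs] <;>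
    linarith [sq_nonneg y.1, sq_nonneg y.2]

lemma eventually_support_gnomonicDensity_subset {W : Set (ℝ × ℝ)} (hW : W ∈ 𝓝 0) :
    ∀ᶠ ε in 𝓝[>] (0 : ℝ), ∀ g, IsEtaForm ε g → Function.support (gnomonicDensity g) ⊆ W := by
  obtain ⟨ρ, hρ, hball⟩ := Metric.mem_nhds_iff.1 hW
  have hρ' : 0 < min (1 / 2) (ρ ^ 2 / 8) := by positivity
  filter_upwards [Ioo_mem_nhdsGT hρ'] with ε hε g hg y hy
  obtain ⟨hε1, hε2⟩ := lt_min_iff.1 hε.2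
  refine hball (mem_ball_zero_iff.2 (lt_of_pow_lt_pow_left₀ 2 hρ.le ?_))
  linarith [gnomonicDensity_support hε1.le hg hy]

/-- The gnomonic coordinates of the direction of the chord from `f p.1` to `f p.2`. -/
def chordSlope (f : ℝ → E3) (p : ℝ × ℝ) : ℝ × ℝ :=
  ((f p.2 0 - f p.1 0) / (f p.2 2 - f p.1 2), (f p.2 1 - f p.1 1) / (f p.2 2 - f p.1 2))

lemma chordSlope_eq_zero {f : ℝ → E3} {p : ℝ × ℝ} (hp : pr12 (f p.1) = pr12 (f p.2)) :
    chordSlope f p = 0 := by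
  simp only [pr12, Prod.mk.injEq] at hp
  simp [chordSlope, hp.1, hp.2]

lemma hasDerivAt_coord {f : ℝ → E3} {t : ℝ} (hf : DifferentiableAt ℝ f t) (i : Fin 3) :
    HasDerivAt (fun s => f s i) (deriv f t i) t :=
  (EuclideanSpace.proj i : E3 →L[ℝ] ℝ).hasFDerivAt.comp_hasDerivAt t hf.hasDerivAt

lemma contDiff_chord_coord {f : ℝ → E3} {n : WithTop ℕ∞} (hf : ContDiff ℝ n f) (i : Fin 3) :
    ContDiff ℝ n fun p : ℝ × ℝ => f p.2 i - f p.1 i :=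
  have hi := (EuclideanSpace.proj i : E3 →L[ℝ] ℝ).contDiff.comp hf
  (hi.comp contDiff_snd).sub (hi.comp contDiff_fst)

lemma contDiffAt_chordSlope {f : ℝ → E3} {n : WithTop ℕ∞} (hf : ContDiff ℝ n f) {p : ℝ × ℝ}
    (hp : f p.2 2 - f p.1 2 ≠ 0) : ContDiffAt ℝ n (chordSlope f) p :=
  have hc (i : Fin 3) := (contDiff_chord_coord hf i).contDiffAt (x := p)
  ((hc 0).div (hc 2) hp).prodMk ((hc 1).div (hc 2) hp)

lemma det_prod (L M : ℝ × ℝ →L[ℝ] ℝ) :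
    (L.prod M).det = L (1, 0) * M (0, 1) - L (0, 1) * M (1, 0) := by
  rw [ContinuousLinearMap.det, ← LinearMap.det_toMatrix (Module.Basis.finTwoProd ℝ),
    Matrix.det_fin_two]
  simp [LinearMap.toMatrix_apply]

lemma det_fderiv_chordSlope {f : ℝ → E3} (hf : Differentiable ℝ f) {p : ℝ × ℝ}
    (hp : f p.2 2 - f p.1 2 ≠ 0) :
    (fderiv ℝ (chordSlope f) p).det = chordDet f p / (f p.2 2 - f p.1 2) ^ 3 := by
  have hd (i : Fin 3) : HasFDerivAt (fun q : ℝ × ℝ => f q.2 i - f q.1 i)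
      (deriv f p.2 i • ContinuousLinearMap.snd ℝ ℝ ℝ -
        deriv f p.1 i • ContinuousLinearMap.fst ℝ ℝ ℝ) p :=
    ((hasDerivAt_coord (hf _) i).comp_hasFDerivAt p hasFDerivAt_snd).fun_sub
      ((hasDerivAt_coord (hf _) i).comp_hasFDerivAt p hasFDerivAt_fst)
  have hinv := (hasDerivAt_inv hp).comp_hasFDerivAt p (hd 2)
  have hslope : HasFDerivAt (chordSlope f) _ p :=
    ((hd 0).mul hinv).prodMk ((hd 1).mul hinv)
  rw [hslope.fderiv, det_prod, eq_div_iff (pow_ne_zero 3 hp)]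
  simp only [neg_smul, smul_neg, Function.comp_apply, add_apply, neg_apply, smul_apply, sub_apply,
    ContinuousLinearMap.coe_snd', ContinuousLinearMap.coe_fst', smul_eq_mul, chordDet, det3,
    PiLp.sub_apply, PiLp.neg_apply]
  field_simp
  ring

lemma chordDensity_eq {f : ℝ → E3} (hf : Differentiable ℝ f) (g : E3 → ℝ) {p : ℝ × ℝ}
    (hp : 0 < f p.2 2 - f p.1 2) :
    chordDensity f g p =
      (fderiv ℝ (chordSlope f) p).det * gnomonicDensity g (chordSlope f p) := by
  have hslope : mk3 (chordSlope f p).1 (chordSlope f p).2 1 =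
      (f p.2 2 - f p.1 2)⁻¹ • (f p.2 - f p.1) := by
    apply E3_ext <;> simp [chordSlope, div_eq_inv_mul, hp.ne']
  rw [det_fderiv_chordSlope hf hp.ne', chordDensity, gnomonicDensity, hslope,
    unitv_smul (inv_pos.2 hp), norm_smul, Real.norm_of_nonneg (inv_pos.2 hp).le]
  field_simp

lemma integrableOn_and_setIntegral_det_mul_comp {E : Type*} [NormedAddCommGroup E]
    [NormedSpace ℝ E] [FiniteDimensional ℝ E] [MeasurableSpace E] [BorelSpace E] {μ : Measure E}
    [μ.IsAddHaarMeasure] {B : Set E} {ψ : E → E} {G : E → ℝ} {c : ℝ} (hB : MeasurableSet B)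
    (hψ : ∀ x ∈ B, DifferentiableAt ℝ ψ x) (hinj : InjOn ψ B) (hG : Integrable G μ)
    (hsupp : Function.support G ⊆ ψ '' B)
    (hdet : ∀ x ∈ B, (fderiv ℝ ψ x).det = c * |(fderiv ℝ ψ x).det|) :
    IntegrableOn (fun x => (fderiv ℝ ψ x).det * G (ψ x)) B μ ∧
      ∫ x in B, (fderiv ℝ ψ x).det * G (ψ x) ∂μ = c * ∫ y, G y ∂μ := by
  have hder (x) (hx : x ∈ B) : HasFDerivWithinAt ψ (fderiv ℝ ψ x) B x :=
    (hψ x hx).hasFDerivAt.hasFDerivWithinAt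
  have heq : EqOn (fun x => (fderiv ℝ ψ x).det * G (ψ x))
      (fun x => c * (|(fderiv ℝ ψ x).det| • G (ψ x))) B := fun x hx => by
    simp only [smul_eq_mul, ← mul_assoc, ← hdet x hx]
  rw [integrableOn_congr_fun heq hB, setIntegral_congr_fun hB heq, integral_const_mul,
    ← integral_image_eq_integral_abs_det_fderiv_smul μ hB hder hinj,
    setIntegral_eq_integral_of_forall_compl_eq_zero fun y hy => by_contra fun h => hy (hsupp h)]
  exact ⟨((integrableOn_image_iff_integrableOn_abs_det_fderiv_smul μ hB hder hinj G).1
    hG.integrableOn).const_mul c, rfl⟩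

lemma exists_injOn_of_det_fderiv_ne_zero {E : Type*} [NormedAddCommGroup E] [NormedSpace ℝ E]
    [FiniteDimensional ℝ E] {ψ : E → E} {p : E} (hψ : ContDiffAt ℝ 1 ψ p)
    (hdet : (fderiv ℝ ψ p).det ≠ 0) :
    (∃ U ∈ 𝓝 p, InjOn ψ U) ∧ map ψ (𝓝 p) = 𝓝 (ψ p) := by
  have := FiniteDimensional.complete ℝ E
  have hstrict : HasStrictFDerivAt ψ
      ((fderiv ℝ ψ p).toContinuousLinearEquivOfDetNeZero hdet : E →L[ℝ] E) p :=
    hψ.hasStrictFDerivAt one_ne_zero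
  have hsource := (hstrict.toOpenPartialHomeomorph ψ).open_source.mem_nhds
    hstrict.mem_toOpenPartialHomeomorph_source
  exact ⟨⟨_, hsource, (hstrict.toOpenPartialHomeomorph ψ).injOn⟩, hstrict.map_nhds_eq_of_equiv⟩

lemma continuous_chordDet {f : ℝ → E3} (hf : ContDiff ℝ 1 f) : Continuous (chordDet f) := by
  have hf0 := hf.continuous
  have := hf.continuous_deriv le_rfl
  unfold chordDet det3
  fun_prop

section Crossing

variable {f : ℝ → E3} {p : ℝ × ℝ}

lemma chordDet_of_mem_crossingK (hp : p ∈ CrossingK f) :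
    chordDet f p = (f p.2 2 - f p.1 2) * cross2 (deriv f p.2) (deriv f p.1) := by
  obtain ⟨h0, h1⟩ := Prod.mk.inj hp.2.1
  simp only [chordDet, det3, cross2, PiLp.sub_apply, PiLp.neg_apply, h0, h1]
  ring

lemma eventually_sign_chordDet (hf : ContDiff ℝ 1 f) (hp : p ∈ CrossingK f)
    (hc : cross2 (deriv f p.2) (deriv f p.1) ≠ 0) :
    ∀ᶠ q in 𝓝 p, 0 < f q.2 2 - f q.1 2 ∧ chordDet f q = csignK f p * |chordDet f q| := by
  have hz : 0 < f p.2 2 - f p.1 2 := sub_pos.2 hp.2.2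
  have hpos : 0 < csignK f p * chordDet f p := by
    rw [chordDet_of_mem_crossingK hp, mul_left_comm]
    exact mul_pos hz (Real.sign_mul_pos_of_ne_zero _ hc)
  filter_upwards [continuousAt_const.eventually_lt
      (contDiff_chord_coord hf 2).continuous.continuousAt hz,
    continuousAt_const.eventually_lt
      ((continuous_chordDet hf).const_mul (csignK f p)).continuousAt hpos] with q hq2 hq
  refine ⟨hq2, ?_⟩
  rcases Real.sign_apply_eq_of_ne_zero _ hc with hs | hs <;> rw [csignK, hs] at hq ⊢
  · rw [abs_of_neg (by linarith)]; ring
  · rw [abs_of_pos (by linarith), one_mul]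

lemma exists_injOn_chordSlope (hf : ContDiff ℝ 1 f) (hp : p ∈ CrossingK f)
    (hc : cross2 (deriv f p.2) (deriv f p.1) ≠ 0) :
    (∃ U ∈ 𝓝 p, InjOn (chordSlope f) U) ∧ map (chordSlope f) (𝓝 p) = 𝓝 0 := by
  have hz : f p.2 2 - f p.1 2 ≠ 0 := (sub_pos.2 hp.2.2).ne'
  rw [← chordSlope_eq_zero hp.2.1]
  refine exists_injOn_of_det_fderiv_ne_zero (contDiffAt_chordSlope hf hz) ?_
  rw [det_fderiv_chordSlope (hf.differentiable one_ne_zero) hz, chordDet_of_mem_crossingK hp]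
  exact div_ne_zero (mul_ne_zero hz hc) (pow_ne_zero 3 hz)

lemma eventually_eq_of_crossing (hf : ContDiff ℝ 1 f) (hp : p ∈ CrossingK f)
    (hc : cross2 (deriv f p.2) (deriv f p.1) ≠ 0) :
    ∀ᶠ q in 𝓝 p, pr12 (f q.1) = pr12 (f q.2) → q = p := by
  obtain ⟨⟨U, hU, hinj⟩, -⟩ := exists_injOn_chordSlope hf hp hc
  filter_upwards [hU] with q hq hcross
  exact hinj hq (mem_of_mem_nhds hU) ((chordSlope_eq_zero hcross).trans
    (chordSlope_eq_zero hp.2.1).symm)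

lemma eventually_setIntegral_ball_chordDensity (hf : ContDiff ℝ 1 f) (hp : p ∈ CrossingK f)
    (hc : cross2 (deriv f p.2) (deriv f p.1) ≠ 0) :
    ∀ᶠ δ in 𝓝[>] (0 : ℝ), ∀ᶠ ε in 𝓝[>] (0 : ℝ), ∀ g, IsEtaForm ε g →
      IntegrableOn (chordDensity f g) (Metric.ball p δ) ∧
        ∫ q in Metric.ball p δ, chordDensity f g q = csignK f p := by
  have hdiff := hf.differentiable one_ne_zero
  obtain ⟨⟨U, hU, hinj⟩, hmap⟩ := exists_injOn_chordSlope hf hp hc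
  filter_upwards [nhdsWithin_le_nhds
      (eventually_ball_subset (inter_mem hU (eventually_sign_chordDet hf hp hc))),
    self_mem_nhdsWithin] with δ hball hδ
  have hpos (q) (hq : q ∈ Metric.ball p δ) : 0 < f q.2 2 - f q.1 2 := (hball hq).2.1
  have himage : chordSlope f '' Metric.ball p δ ∈ 𝓝 0 := by
    rw [← hmap]; exact image_mem_map (Metric.ball_mem_nhds p hδ)
  filter_upwards [eventually_support_gnomonicDensity_subset himage,
    Ioo_mem_nhdsGT one_pos] with ε hsupp hε g hg
  have hint := hg.integral_gnomonicDensity hε.2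
  have hdet (q) (hq : q ∈ Metric.ball p δ) :
      (fderiv ℝ (chordSlope f) q).det = csignK f p * |(fderiv ℝ (chordSlope f) q).det| := by
    have hz := pow_pos (hpos q hq) 3
    rw [det_fderiv_chordSlope hdiff (hpos q hq).ne', abs_div, abs_of_pos hz, ← mul_div_assoc,
      ← (hball hq).2.2]
  have heq : EqOn (chordDensity f g) _ (Metric.ball p δ) := fun q hq =>
    chordDensity_eq hdiff g (hpos q hq)
  have hcov := integrableOn_and_setIntegral_det_mul_comp measurableSet_ball
    (fun q hq => (contDiffAt_chordSlope hf (hpos q hq).ne').differentiableAt one_ne_zero)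
    (hinj.mono fun q hq => (hball hq).1)
    (by_contra fun h => one_ne_zero (hint ▸ integral_undef h)) (hsupp g hg) hdet
  rwa [hint, mul_one, ← integrableOn_congr_fun heq measurableSet_ball,
    ← setIntegral_congr_fun measurableSet_ball heq] at hcov

end Crossing

/-! ### Compactness: where nearly vertical interleaved chords accumulate -/

/-- The parameter pairs of the chords of `f` whose direction makes an angle at most
`arccos (1 - ε)` with the vertical. For `ε = 0` these are the crossings, see
`steepChords_zero`. -/
def steepChords (f : ℝ → E3) (ε : ℝ) : Set (ℝ × ℝ) :=
  {p | p.1 ≠ p.2 ∧ IsSteep ε (f p.2 - f p.1)}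

lemma steepChords_zero {f : ℝ → E3} (hinj : Function.Injective f) :
    steepChords f 0 = CrossingK f := by
  ext p
  simp only [steepChords, CrossingK, isSteep_zero_iff, pr12, pr3, PiLp.sub_apply, sub_eq_zero,
    sub_nonneg, Prod.mk.injEq, mem_ofPred_eq, and_assoc]
  refine and_congr_right fun hne => ⟨fun ⟨h0, h1, h2⟩ => ⟨h0.symm, h1.symm, h2.lt_of_ne ?_⟩,
    fun ⟨h0, h1, h2⟩ => ⟨h0.symm, h1.symm, h2.le⟩⟩
  intro h
  exact hne (hinj (E3_ext h0.symm h1.symm h))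

lemma exists_norm_le_of_mem_steepChords {f : ℝ → E3} (hf : Continuous f)
    (hinj : Function.Injective f) (hstd : ∀ x : ℝ, 1 ≤ |x| → f x = mk3 x 0 0) :
    ∃ R, ∀ ε ≤ (1 / 2 : ℝ), ∀ p ∈ steepChords f ε, ‖p‖ ≤ R := by
  obtain ⟨M, hM⟩ := (isCompact_Icc (a := (-1 : ℝ)) (b := 1)).exists_bound_of_continuousOn
    hf.continuousOn
  have hinside (x : ℝ) (hx : |x| < 1) : ‖f x‖ ≤ M := hM x (abs_le.1 hx.le)
  have hM0 : 0 ≤ M := (norm_nonneg _).trans (hinside 0 (by simp))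
  have hheight (x : ℝ) : |f x 2| ≤ M := by
    rcases lt_or_ge |x| 1 with hx | hx
    · exact (PiLp.norm_apply_le (f x) 2).trans (hinside x hx)
    · simpa [hstd x hx] using hM0
  have hgrowth (x : ℝ) : |x| ≤ ‖f x‖ + 1 := by
    rcases lt_or_ge |x| 1 with hx | hx
    · linarith [norm_nonneg (f x)]
    · have hle : |f x 0| ≤ ‖f x‖ := PiLp.norm_apply_le (f x) 0
      rw [hstd x hx, mk3_apply_zero] at hle
      rw [hstd x hx]
      linarith
  refine ⟨5 * M + 1, fun ε hε p ⟨hne, hsteep⟩ => ?_⟩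
  have hd : f p.2 - f p.1 ≠ 0 := sub_ne_zero.2 (hinj.ne hne.symm)
  have hz : f p.2 2 - f p.1 2 ≤ 2 * M := by
    linarith [abs_le.1 (hheight p.1), abs_le.1 (hheight p.2)]
  have hdist : ‖f p.2 - f p.1‖ ≤ 4 * M := by
    have hle : (1 - ε) * ‖f p.2 - f p.1‖ ≤ f p.2 2 - f p.1 2 := hsteep
    nlinarith [norm_nonneg (f p.2 - f p.1)]
  have hone : |p.1| < 1 ∨ |p.2| < 1 := by
    by_contra! hout
    have hpos : 0 < f p.2 2 - f p.1 2 := hsteep.pos (by linarith) hd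
    simp [hstd _ hout.1, hstd _ hout.2] at hpos
  have hnorm : ‖f p.1‖ ≤ 5 * M ∧ ‖f p.2‖ ≤ 5 * M := by
    have h21 := norm_le_norm_add_norm_sub' (f p.2) (f p.1)
    have h12 := norm_le_norm_add_norm_sub' (f p.1) (f p.2)
    rw [norm_sub_rev] at h12
    rcases hone with h | h <;> have := hinside _ h <;> constructor <;> linarith
  rw [Prod.norm_def, Real.norm_eq_abs, Real.norm_eq_abs, max_le_iff]
  exact ⟨(hgrowth _).trans (by linarith), (hgrowth _).trans (by linarith)⟩

lemma tendsto_slope_of_hasStrictDerivAt {E ι : Type*} [NormedAddCommGroup E] [NormedSpace ℝ E]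
    {f : ℝ → E} {f' : E} {a : ℝ} {l : Filter ι} {s t : ι → ℝ} (hf : HasStrictDerivAt f f' a)
    (hs : Tendsto s l (𝓝 a)) (ht : Tendsto t l (𝓝 a)) (hne : ∀ᶠ n in l, s n ≠ t n) :
    Tendsto (fun n => (t n - s n)⁻¹ • (f (t n) - f (s n))) l (𝓝 f') := by
  have hlim := ((hf.hasStrictFDerivAt.isLittleO.comp_tendsto
    (ht.prodMk_nhds hs)).tendsto_inv_smul_nhds_zero).add_const f'
  rw [zero_add] at hlim
  refine hlim.congr' ?_
  filter_upwards [hne] with n hn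
  simp [Function.comp, smul_sub, smul_smul, inv_mul_cancel₀ (sub_ne_zero.2 hn.symm)]

lemma isSteep_smul_deriv_of_tendsto {ι : Type*} {l : Filter ι} [l.NeBot] {f : ℝ → E3}
    (hf : ContDiff ℝ 1 f) {s t ε : ι → ℝ} {a ε₀ c : ℝ} (hs : Tendsto s l (𝓝 a))
    (ht : Tendsto t l (𝓝 a)) (hε : Tendsto ε l (𝓝 ε₀)) (hpos : ∀ᶠ n in l, 0 < c * (t n - s n))
    (hsteep : ∀ᶠ n in l, IsSteep (ε n) (f (t n) - f (s n))) : IsSteep ε₀ (c • deriv f a) := by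
  have hne : ∀ᶠ n in l, s n ≠ t n := hpos.mono fun n hn h => by simp [h] at hn
  have hslope := tendsto_slope_of_hasStrictDerivAt (hf.contDiffAt.hasStrictDerivAt one_ne_zero)
    hs ht hne
  refine IsSteep.of_tendsto hε (hslope.const_smul c) ?_
  filter_upwards [hpos, hsteep] with n hn hn'
  rw [smul_smul]
  refine hn'.smul ?_
  rw [← div_eq_mul_inv, ← mul_div_mul_right c _ (right_ne_zero_of_mul hn.ne')]
  exact div_nonneg hn.le (mul_self_nonneg _)

/-- Pairs of chords, with coordinates `((x₁, x₃), (x₄, x₂))` for the chords `x₁ → x₃` and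
`x₄ → x₂` of the arrow diagram `X`. -/
abbrev ChordPair : Type := (ℝ × ℝ) × (ℝ × ℝ)

/-- The linear forms `x₁ - x₂`, `x₂ - x₃`, `x₃ - x₄`, whose negativity cuts out `C_X`. -/
def gap : Fin 3 → ChordPair →ₗ[ℝ] ℝ :=
  ![.fst ℝ ℝ ℝ ∘ₗ .fst ℝ _ _ - .snd ℝ ℝ ℝ ∘ₗ .snd ℝ _ _,
    .snd ℝ ℝ ℝ ∘ₗ .snd ℝ _ _ - .snd ℝ ℝ ℝ ∘ₗ .fst ℝ _ _,
    .snd ℝ ℝ ℝ ∘ₗ .fst ℝ _ _ - .fst ℝ ℝ ℝ ∘ₗ .snd ℝ _ _]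

@[simp] lemma gap_zero_apply (k : ChordPair) : gap 0 k = k.1.1 - k.2.2 := rfl

@[simp] lemma gap_one_apply (k : ChordPair) : gap 1 k = k.2.2 - k.1.2 := rfl

@[simp] lemma gap_two_apply (k : ChordPair) : gap 2 k = k.1.2 - k.2.1 := rfl

lemma forall_gap_nonpos {k : ChordPair} :
    (∀ i, gap i k ≤ 0) ↔ k.1.1 ≤ k.2.2 ∧ k.2.2 ≤ k.1.2 ∧ k.1.2 ≤ k.2.1 := by
  simp [Fin.forall_fin_succ]

lemma forall_gap_neg {k : ChordPair} :
    (∀ i, gap i k < 0) ↔ k.1.1 < k.2.2 ∧ k.2.2 < k.1.2 ∧ k.1.2 < k.2.1 := by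
  simp [Fin.forall_fin_succ]

lemma continuous_gap (i : Fin 3) : Continuous (gap i) := (gap i).continuous_of_finiteDimensional

/-- The pairs of steep chords whose endpoints are in the order of the arrow diagram `X`,
up to coincidences of neighbouring endpoints. -/
def steepPairs (f : ℝ → E3) (ε : ℝ) : Set ChordPair :=
  {k | k.1 ∈ steepChords f ε ∧ k.2 ∈ steepChords f ε ∧ ∀ i, gap i k ≤ 0}

lemma TransverseK.cross2_ne_zero {f : ℝ → E3} (hD : TransverseK f) {p : ℝ × ℝ}
    (hp : p ∈ CrossingK f) : cross2 (deriv f p.2) (deriv f p.1) ≠ 0 :=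
  hD p.2 p.1 hp.1.symm hp.2.1.symm

lemma TransverseK.not_isSteep_smul_deriv {f : ℝ → E3} (hD : TransverseK f) {p : ℝ × ℝ}
    (hp : p ∈ CrossingK f) {c : ℝ} (hc : c ≠ 0) : ¬ IsSteep 0 (c • deriv f p.2) := fun h => by
  obtain ⟨h0, h1, -⟩ := isSteep_zero_iff.1 h
  simp only [PiLp.smul_apply, smul_eq_mul, mul_eq_zero, hc, false_or] at h0 h1
  exact hD.cross2_ne_zero hp (by simp [cross2, h0, h1])

lemma mem_steepPairs_zero_of_isSteep {f : ℝ → E3} (hinj : Function.Injective f)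
    (hderiv : ∀ t, deriv f t ≠ 0) (hD : TransverseK f) {z : ChordPair}
    (hgap : ∀ i, gap i z ≤ 0) (h₁ : IsSteep 0 (f z.1.2 - f z.1.1))
    (h₂ : IsSteep 0 (f z.2.2 - f z.2.1))
    (hup : z.1.1 = z.1.2 → IsSteep 0 ((1 : ℝ) • deriv f z.1.2))
    (hdown : z.2.1 = z.2.2 → IsSteep 0 ((-1 : ℝ) • deriv f z.2.2)) : z ∈ steepPairs f 0 := by
  have hgap₀ : z.1.1 ≤ z.2.2 := sub_nonpos.1 (hgap 0)
  have hgap₁ : z.2.2 ≤ z.1.2 := sub_nonpos.1 (hgap 1)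
  have hgap₂ : z.1.2 ≤ z.2.1 := sub_nonpos.1 (hgap 2)
  have hcross {p : ℝ × ℝ} (hne : p.1 ≠ p.2) (hs : IsSteep 0 (f p.2 - f p.1)) :
      p ∈ CrossingK f := steepChords_zero hinj ▸ ⟨hne, hs⟩
  rcases eq_or_ne z.1.1 z.1.2 with e₁ | n₁
  · have hup := hup e₁
    rw [(hgap₁.antisymm (e₁ ▸ hgap₀) : z.2.2 = z.1.2).symm] at hup
    rcases eq_or_ne z.2.1 z.2.2 with e₂ | n₂
    · obtain ⟨h0, h1, hz⟩ := isSteep_zero_iff.1 hup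
      obtain ⟨-, -, hz'⟩ := isSteep_zero_iff.1 (hdown e₂)
      simp only [PiLp.smul_apply, smul_eq_mul, one_mul, neg_one_mul, neg_nonneg] at h0 h1 hz hz'
      exact absurd (E3_ext h0 h1 (hz'.antisymm hz)) (hderiv _)
    · exact absurd hup (hD.not_isSteep_smul_deriv (hcross n₂ h₂) one_ne_zero)
  · rcases eq_or_ne z.2.1 z.2.2 with e₂ | n₂
    · have hdown := hdown e₂
      rw [hgap₁.antisymm (e₂ ▸ hgap₂)] at hdown
      exact absurd hdown (hD.not_isSteep_smul_deriv (hcross n₁ h₁) (by norm_num))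
    · exact ⟨⟨n₁, h₁⟩, ⟨n₂, h₂⟩, hgap⟩

lemma mem_steepPairs_zero_of_frequently {f : ℝ → E3} (hf : ContDiff ℝ 1 f)
    (hinj : Function.Injective f) (hderiv : ∀ t, deriv f t ≠ 0) (hD : TransverseK f)
    {z : ChordPair} (hz : ∃ᶠ q : ℝ × ChordPair in 𝓝 (0, z), q.2 ∈ steepPairs f q.1) :
    z ∈ steepPairs f 0 := by
  set l := 𝓝[{q : ℝ × ChordPair | q.2 ∈ steepPairs f q.1}] (0, z)
  have : l.NeBot := mem_closure_iff_nhdsWithin_neBot.1 (mem_closure_iff_frequently.2 hz)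
  have hmem : ∀ᶠ q in l, q.2 ∈ steepPairs f q.1 := self_mem_nhdsWithin
  have hlim {Y : Type} [TopologicalSpace Y] {φ : ℝ × ChordPair → Y} (hφ : Continuous φ) :
      Tendsto φ l (𝓝 (φ (0, z))) := hφ.continuousAt.mono_left nhdsWithin_le_nhds
  have hε : Tendsto Prod.fst l (𝓝 0) := hlim continuous_fst
  have hgap (i : Fin 3) : gap i z ≤ 0 :=
    le_of_tendsto (hlim ((continuous_gap i).comp continuous_snd)) (hmem.mono fun q hq => hq.2.2 i)
  have hsteep₁ : IsSteep 0 (f z.1.2 - f z.1.1) :=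
    .of_tendsto hε (hlim (φ := fun q => f q.2.1.2 - f q.2.1.1) (by have := hf.continuous; fun_prop))
      (hmem.mono fun q hq => hq.1.2)
  have hsteep₂ : IsSteep 0 (f z.2.2 - f z.2.1) :=
    .of_tendsto hε (hlim (φ := fun q => f q.2.2.2 - f q.2.2.1) (by have := hf.continuous; fun_prop))
      (hmem.mono fun q hq => hq.2.1.2)
  refine mem_steepPairs_zero_of_isSteep hinj hderiv hD hgap hsteep₁ hsteep₂ (fun h => ?_)
    fun h => ?_
  · refine isSteep_smul_deriv_of_tendsto hf (s := fun q => q.2.1.1) (t := fun q => q.2.1.2)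
      (h ▸ hlim (by fun_prop)) (hlim (by fun_prop)) hε (hmem.mono fun q ⟨h₁, _, hg⟩ => ?_)
      (hmem.mono fun q hq => hq.1.2)
    have := h₁.1.lt_of_le (by linarith [hg 0, hg 1, gap_zero_apply q.2, gap_one_apply q.2])
    linarith
  · refine isSteep_smul_deriv_of_tendsto hf (s := fun q => q.2.2.1) (t := fun q => q.2.2.2)
      (h ▸ hlim (by fun_prop)) (hlim (by fun_prop)) hε (hmem.mono fun q ⟨_, h₂, hg⟩ => ?_)
      (hmem.mono fun q hq => hq.2.1.2)
    have := h₂.1.symm.lt_of_le (by linarith [hg 1, hg 2, gap_one_apply q.2, gap_two_apply q.2])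
    linarith

lemma exists_norm_le_of_mem_steepPairs {f : ℝ → E3} (hf : Continuous f)
    (hinj : Function.Injective f) (hstd : ∀ x : ℝ, 1 ≤ |x| → f x = mk3 x 0 0) :
    ∃ R, ∀ ε ≤ (1 / 2 : ℝ), ∀ k ∈ steepPairs f ε, ‖k‖ ≤ R := by
  obtain ⟨R, hR⟩ := exists_norm_le_of_mem_steepChords hf hinj hstd
  exact ⟨R, fun ε hε k hk => max_le (hR ε hε k.1 hk.1) (hR ε hε k.2 hk.2.1)⟩

section LongKnot

variable {f : ℝ → E3} (hf : IsLongKnot f) (hD : TransverseK f)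
include hf hD

lemma finite_steepPairs_zero : (steepPairs f 0).Finite := by
  obtain ⟨hsmooth, hinj, hderiv, hstd⟩ := hf
  have hC1 : ContDiff ℝ 1 f := hsmooth.of_le (mod_cast le_top)
  obtain ⟨R, hR⟩ := exists_norm_le_of_mem_steepPairs hsmooth.continuous hinj hstd
  by_contra hinf
  obtain ⟨z, -, hacc⟩ := Set.Infinite.exists_accPt_of_subset_isCompact hinf
    (isCompact_closedBall (0 : ChordPair) R)
    fun k hk => mem_closedBall_zero_iff.2 (hR 0 (by norm_num) k hk)
  rw [accPt_iff_frequently] at hacc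
  have hz : z ∈ steepPairs f 0 :=
    mem_steepPairs_zero_of_frequently hC1 hinj hderiv hD <|
      (tendsto_const_nhds.prodMk_nhds tendsto_id).frequently (hacc.mono fun k hk => hk.2)
  have hisolated {p : ℝ × ℝ} (hp : p ∈ steepChords f 0) :
      ∀ᶠ q in 𝓝 p, q ∈ steepChords f 0 → q = p := by
    rw [steepChords_zero hinj] at hp ⊢
    exact (eventually_eq_of_crossing hC1 hp (hD.cross2_ne_zero hp)).mono fun q hq h => hq h.2.1
  refine hacc (((hisolated hz.1).prod_nhds (hisolated hz.2.1)).mono fun k hk hk' => hk'.1 ?_)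
  exact Prod.ext (hk.1 hk'.2.1) (hk.2 hk'.2.2.1)

lemma eventually_steepPairs_subset {U : Set ChordPair} (hU : IsOpen U)
    (h0 : steepPairs f 0 ⊆ U) : ∀ᶠ ε in 𝓝 0, steepPairs f ε ⊆ U := by
  obtain ⟨hsmooth, hinj, hderiv, hstd⟩ := hf
  have hC1 : ContDiff ℝ 1 f := hsmooth.of_le (mod_cast le_top)
  obtain ⟨R, hR⟩ := exists_norm_le_of_mem_steepPairs hsmooth.continuous hinj hstd
  have hK : IsCompact (Metric.closedBall (0 : ChordPair) R \ U) :=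
    (isCompact_closedBall 0 R).diff hU
  have haway := hK.eventually_forall_of_forall_eventually (x₀ := (0 : ℝ))
    (P := fun ε k => k ∉ steepPairs f ε) fun k hk => by
      by_contra hfreq
      exact hk.2 (h0 (mem_steepPairs_zero_of_frequently hC1 hinj hderiv hD
        (by simpa only [not_eventually, not_not] using hfreq)))
  filter_upwards [haway, Iic_mem_nhds (one_half_pos (α := ℝ))] with ε hε hε2 k hk
  by_contra hkU
  exact hε k ⟨mem_closedBall_zero_iff.2 (hR ε hε2 k hk), hkU⟩ hk

end LongKnot

/-! ### Half-turn symmetry near multiple points -/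

/-- Near the parameter `t`, reversing time is the half-turn about the vertical axis through
`f t`. Horizontal straight segments have this property, which is all that is needed of them. -/
def IsHalfTurnSymm (f : ℝ → E3) (t δ : ℝ) : Prop :=
  ∀ s ∈ Metric.ball t δ, f (t + t - s) - f t = halfTurn (f s - f t)

lemma StraightNearMultipleK.eventually_isHalfTurnSymm {f : ℝ → E3}
    (hS : StraightNearMultipleK f) {t u v : ℝ} (htu : t ≠ u) (huv : u ≠ v) (htv : t ≠ v)
    (hu : pr12 (f t) = pr12 (f u)) (hv : pr12 (f u) = pr12 (f v)) :
    ∀ᶠ δ in 𝓝[>] (0 : ℝ), IsHalfTurnSymm f t δ := by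
  obtain ⟨r, hr, w, hw, hstraight⟩ := hS t u v htu huv htv hu hv
  filter_upwards [Ioo_mem_nhdsGT hr] with δ hδ s hs
  have hs' : |s - t| < r := (Real.dist_eq s t ▸ hs : |s - t| < δ).trans hδ.2
  have hrefl : |t + t - s - t| < r := by
    rwa [add_sub_right_comm, add_sub_cancel_right, abs_sub_comm]
  rw [hstraight s hs', hstraight _ hrefl, add_sub_cancel_left, add_sub_cancel_left,
    halfTurn_eq_neg (by simp [hw]), ← neg_smul]
  congr 1
  ring

section HalfTurn

variable {f : ℝ → E3} {δ : ℝ}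

lemma add_self_sub_mem_ball {E : Type*} [SeminormedAddCommGroup E] {k z : E} {r : ℝ} :
    k + k - z ∈ Metric.ball k r ↔ z ∈ Metric.ball k r := by
  rw [mem_ball_iff_norm, mem_ball_iff_norm', add_sub_right_comm, add_sub_cancel_right]

lemma IsHalfTurnSymm.halfTurn_deriv {t : ℝ} (h : IsHalfTurnSymm f t δ)
    (hf : Differentiable ℝ f) {s : ℝ} (hs : s ∈ Metric.ball t δ) :
    halfTurn (deriv f s) = -deriv f (t + t - s) := by
  have heq : (fun s => f (t + t - s)) =ᶠ[𝓝 s] fun s => halfTurn (f s - f t) + f t := by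
    filter_upwards [Metric.isOpen_ball.mem_nhds hs] with r hr
    rw [← h r hr, sub_add_cancel]
  have hderiv : HasDerivAt (fun s => halfTurn (f s - f t) + f t) (halfTurn (deriv f s)) s :=
    ((halfTurn.toContinuousLinearEquiv.hasFDerivAt).comp_hasDerivAt s
      ((hf s).hasDerivAt.sub_const (f t))).add_const (f t)
  rw [← hderiv.deriv, ← heq.deriv_eq, deriv_comp_const_sub]

lemma IsHalfTurnSymm.chord_reflect {p q : ℝ × ℝ} (h₁ : IsHalfTurnSymm f p.1 δ)
    (h₂ : IsHalfTurnSymm f p.2 δ) (hp : pr12 (f p.1) = pr12 (f p.2)) (hq : q ∈ Metric.ball p δ) :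
    f (p + p - q).2 - f (p + p - q).1 = halfTurn (f q.2 - f q.1) := by
  rw [← ball_prod_same] at hq
  obtain ⟨h0, h1⟩ := Prod.mk.inj hp
  have hvert : halfTurn (f p.2 - f p.1) = f p.2 - f p.1 :=
    halfTurn_eq_self (by simp [h0]) (by simp [h1])
  have hsplit : f q.2 - f q.1 = (f q.2 - f p.2) - (f q.1 - f p.1) + (f p.2 - f p.1) := by abel
  rw [hsplit, map_add, map_sub, hvert, ← h₁ _ hq.1, ← h₂ _ hq.2]
  simp only [Prod.fst_sub, Prod.fst_add, Prod.snd_sub, Prod.snd_add]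
  abel

lemma IsHalfTurnSymm.chordDensity_reflect {p q : ℝ × ℝ} (h₁ : IsHalfTurnSymm f p.1 δ)
    (h₂ : IsHalfTurnSymm f p.2 δ) (hf : Differentiable ℝ f) (hp : pr12 (f p.1) = pr12 (f p.2))
    {ε : ℝ} {g : E3 → ℝ} (hg : IsEtaForm ε g) (hq : q ∈ Metric.ball p δ) :
    chordDensity f g (p + p - q) = chordDensity f g q := by
  have hd := h₁.chord_reflect h₂ hp hq
  rw [← ball_prod_same] at hq
  have hd₁ : -deriv f (p + p - q).1 = -halfTurn (-deriv f q.1) := by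
    rw [map_neg, h₁.halfTurn_deriv hf hq.1]; simp
  have hd₂ : deriv f (p + p - q).2 = -halfTurn (deriv f q.2) := by
    rw [h₂.halfTurn_deriv hf hq.2]; simp
  have hdet : chordDet f (p + p - q) = chordDet f q := by
    rw [chordDet, chordDet, hd, hd₁, hd₂, ← det3_halfTurn (f q.2 - f q.1)]
    simp only [det3, PiLp.neg_apply]
    ring
  rw [chordDensity, chordDensity, hdet, hd, hg.apply_unitv_halfTurn, LinearIsometryEquiv.norm_map]

end HalfTurn

/-! ### The contribution of a pair of crossings to `I_X` -/

lemma setIntegral_ball_inter_halfSpace {E : Type*} [NormedAddCommGroup E] [NormedSpace ℝ E]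
    [FiniteDimensional ℝ E] [MeasurableSpace E] [BorelSpace E] {μ : Measure E}
    [μ.IsAddHaarMeasure] {L : E →ₗ[ℝ] ℝ} (hL : L ≠ 0) {k : E} (hk : L k = 0) {δ : ℝ} {G : E → ℝ}
    (hG : IntegrableOn G (Metric.ball k δ) μ)
    (hsymm : ∀ z ∈ Metric.ball k δ, G (k + k - z) = G z) :
    ∫ z in Metric.ball k δ ∩ {z | L z < 0}, G z ∂μ = (1 / 2) * ∫ z in Metric.ball k δ, G z ∂μ := by
  have hLc := L.continuous_of_finiteDimensional
  have hneg : MeasurableSet {z | L z < 0} := (isOpen_lt hLc continuous_const).measurableSet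
  have hwall : ∀ᵐ z ∂μ, L z ≠ 0 := measure_eq_zero_iff_ae_notMem.1
    (Measure.addHaar_submodule μ L.ker (mt LinearMap.ker_eq_top.1 hL))
  have hcompl : (Metric.ball k δ \ {z | L z < 0} : Set E) =ᵐ[μ]
      (Metric.ball k δ ∩ {z | 0 < L z} : Set E) := by
    filter_upwards [hwall] with z hz
    exact propext (and_congr_right fun _ => not_lt.trans hz.symm.le_iff_lt)
  have hpre : (k + k - ·) ⁻¹' (Metric.ball k δ ∩ {z | 0 < L z}) =
      Metric.ball k δ ∩ {z | L z < 0} := by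
    ext z
    exact and_congr add_self_sub_mem_ball (by simp [hk])
  have hflip : ∫ z in Metric.ball k δ ∩ {z | 0 < L z}, G z ∂μ =
      ∫ z in Metric.ball k δ ∩ {z | L z < 0}, G z ∂μ := by
    rw [← (μ.measurePreserving_sub_left (k + k)).setIntegral_preimage_emb
      (MeasurableEquiv.subLeft (k + k)).measurableEmbedding, hpre]
    exact setIntegral_congr_fun (measurableSet_ball.inter hneg) fun z hz => hsymm z hz.1
  have hsplit := integral_inter_add_sdiff hneg hG
  rw [setIntegral_congr_set hcompl, hflip] at hsplit
  linarith

instance : (volume : Measure ChordPair).IsAddHaarMeasure :=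
  haveI : (volume : Measure (ℝ × ℝ)).IsAddHaarMeasure :=
    inferInstanceAs ((volume : Measure ℝ).prod volume).IsAddHaarMeasure
  inferInstanceAs ((volume : Measure (ℝ × ℝ)).prod volume).IsAddHaarMeasure

/-- The integrand of `I_X` as a function of a pair of chords. -/
def pairDensity (f : ℝ → E3) (g : E3 → ℝ) (k : ChordPair) : ℝ :=
  chordDensity f g k.1 * chordDensity f g k.2

/-- The configuration space `C_X` as a set of pairs of chords. -/
def chordPairsX : Set ChordPair := {k | ∀ i, gap i k < 0}

lemma isOpen_chordPairsX : IsOpen chordPairsX := by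
  simp only [chordPairsX, ofPred_forall]
  exact isOpen_iInter_of_finite fun i => isOpen_lt (continuous_gap i) continuous_const

/-- The fraction of a small ball around a pair of crossings that lies in `C_X`. -/
def weightX (k : ChordPair) : ℝ := if ∀ i, gap i k < 0 then 1 else 1 / 2

lemma mem_steepPairs_zero {f : ℝ → E3} (hinj : Function.Injective f) {k : ChordPair} :
    k ∈ steepPairs f 0 ↔ k.1 ∈ CrossingK f ∧ k.2 ∈ CrossingK f ∧ ∀ i, gap i k ≤ 0 := by
  rw [steepPairs, steepChords_zero hinj]; rfl

section PairOfCrossings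

variable {f : ℝ → E3} {k : ChordPair} {i : Fin 3}

lemma gap_neg_of_ne (hk₁ : k.1 ∈ CrossingK f) (hk₂ : k.2 ∈ CrossingK f) (hk : ∀ j, gap j k ≤ 0)
    (hi : gap i k = 0) {j : Fin 3} (hj : j ≠ i) : gap j k < 0 := by
  have hgap : ¬ (gap 0 k = 0 ∧ gap 1 k = 0) ∧ ¬ (gap 1 k = 0 ∧ gap 2 k = 0) ∧
      ¬ (gap 0 k = 0 ∧ gap 2 k = 0) := by
    simp only [gap_zero_apply, gap_one_apply, gap_two_apply, sub_eq_zero]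
    refine ⟨fun h => hk₁.1 (h.1.trans h.2), fun h => hk₂.1 (h.1.trans h.2).symm, fun h => ?_⟩
    have h₁ := hk₁.2.2
    rw [h.1, h.2] at h₁
    exact h₁.asymm hk₂.2.2
  refine (hk j).lt_of_ne fun h => ?_
  fin_cases i <;> fin_cases j <;> simp_all

lemma eventually_isHalfTurnSymm_of_gap_eq_zero (hS : StraightNearMultipleK f)
    (hk₁ : k.1 ∈ CrossingK f) (hk₂ : k.2 ∈ CrossingK f) (hk : ∀ j, gap j k ≤ 0)
    (hi : gap i k = 0) : ∀ᶠ δ in 𝓝[>] (0 : ℝ), (IsHalfTurnSymm f k.1.1 δ ∧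
      IsHalfTurnSymm f k.1.2 δ) ∧ IsHalfTurnSymm f k.2.1 δ ∧ IsHalfTurnSymm f k.2.2 δ := by
  have triple {a b c : ℝ} (hab : a < b) (hbc : b < c) (h₁ : pr12 (f a) = pr12 (f b))
      (h₂ : pr12 (f b) = pr12 (f c)) : ∀ᶠ δ in 𝓝[>] (0 : ℝ),
        IsHalfTurnSymm f a δ ∧ IsHalfTurnSymm f b δ ∧ IsHalfTurnSymm f c δ :=
    have hac := hab.trans hbc
    (hS.eventually_isHalfTurnSymm hab.ne hbc.ne hac.ne h₁ h₂).and
      ((hS.eventually_isHalfTurnSymm hbc.ne hac.ne' hab.ne' h₂ (h₁.trans h₂).symm).and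
        (hS.eventually_isHalfTurnSymm hac.ne' hab.ne hbc.ne' (h₁.trans h₂).symm h₁))
  have hlt {j : Fin 3} (hj : j ≠ i) : gap j k < 0 := gap_neg_of_ne hk₁ hk₂ hk hi hj
  obtain ⟨⟨x₁, x₃⟩, x₄, x₂⟩ := k
  have hproj₁ : pr12 (f x₁) = pr12 (f x₃) := hk₁.2.1
  have hproj₂ : pr12 (f x₄) = pr12 (f x₂) := hk₂.2.1
  fin_cases i
  · obtain rfl : x₁ = x₂ := sub_eq_zero.1 hi
    exact (triple (sub_neg.1 (hlt (j := 1) (by decide))) (sub_neg.1 (hlt (j := 2) (by decide)))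
      hproj₁ (hproj₁.symm.trans hproj₂.symm)).mono fun δ ⟨h₁, h₃, h₄⟩ => ⟨⟨h₁, h₃⟩, h₄, h₁⟩
  · obtain rfl : x₂ = x₃ := sub_eq_zero.1 hi
    exact (triple (sub_neg.1 (hlt (j := 0) (by decide))) (sub_neg.1 (hlt (j := 2) (by decide)))
      hproj₁ hproj₂.symm).mono fun δ ⟨h₁, h₃, h₄⟩ => ⟨⟨h₁, h₃⟩, h₄, h₃⟩
  · obtain rfl : x₃ = x₄ := sub_eq_zero.1 hi
    exact (triple (sub_neg.1 (hlt (j := 0) (by decide))) (sub_neg.1 (hlt (j := 1) (by decide)))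
      (hproj₁.trans hproj₂) hproj₂.symm).mono fun δ ⟨h₁, h₂, h₃⟩ => ⟨⟨h₁, h₃⟩, h₃, h₂⟩

lemma eventually_gap_neg_on_ball (hlt : ∀ j ≠ i, gap j k < 0) :
    ∀ᶠ δ in 𝓝[>] (0 : ℝ), ∀ z ∈ Metric.ball k δ, ∀ j ≠ i, gap j z < 0 := by
  have hnear : ∀ᶠ z in 𝓝 k, ∀ j, j ≠ i → gap j z < 0 := eventually_all.2 fun j =>
    eventually_imp_distrib_left.2 fun hj =>
      (continuous_gap j).continuousAt.eventually_lt continuousAt_const (hlt j hj)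
  exact nhdsWithin_le_nhds (eventually_ball_subset hnear)

lemma chordPairsX_inter_ball {δ : ℝ} (hlt : ∀ z ∈ Metric.ball k δ, ∀ j ≠ i, gap j z < 0) :
    chordPairsX ∩ Metric.ball k δ = Metric.ball k δ ∩ {z | gap i z < 0} := by
  ext z
  refine ⟨fun ⟨hz, hzk⟩ => ⟨hzk, hz i⟩, fun ⟨hzk, hz⟩ => ⟨fun j => ?_, hzk⟩⟩
  rcases eq_or_ne j i with rfl | hj
  exacts [hz, hlt z hzk j hj]

lemma gap_ne_zero (i : Fin 3) : gap i ≠ 0 := by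
  intro h
  have hgap := LinearMap.congr_fun h
  fin_cases i
  exacts [by simpa using hgap ((1, 0), (0, 0)), by simpa using hgap ((0, 0), (0, 1)),
    by simpa using hgap ((0, 1), (0, 0))]

lemma eventually_setIntegral_ball_pairDensity (hf : ContDiff ℝ 1 f) (hD : TransverseK f)
    (hk₁ : k.1 ∈ CrossingK f) (hk₂ : k.2 ∈ CrossingK f) :
    ∀ᶠ δ in 𝓝[>] (0 : ℝ), ∀ᶠ ε in 𝓝[>] (0 : ℝ), ∀ g, IsEtaForm ε g →
      IntegrableOn (pairDensity f g) (Metric.ball k δ) ∧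
        ∫ z in Metric.ball k δ, pairDensity f g z = csignK f k.1 * csignK f k.2 := by
  filter_upwards [eventually_setIntegral_ball_chordDensity hf hk₁ (hD.cross2_ne_zero hk₁),
    eventually_setIntegral_ball_chordDensity hf hk₂ (hD.cross2_ne_zero hk₂)] with δ h₁ h₂
  filter_upwards [h₁, h₂] with ε h₁ h₂ g hg
  rw [← ball_prod_same, ← (h₁ g hg).2, ← (h₂ g hg).2, Measure.volume_eq_prod]
  refine ⟨?_, setIntegral_prod_mul _ _ _ _⟩
  rw [IntegrableOn, ← Measure.prod_restrict]
  exact (h₁ g hg).1.mul_prod (h₂ g hg).1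

lemma eventually_setIntegral_chordPairsX_inter_ball (hf : ContDiff ℝ 1 f) (hD : TransverseK f)
    (hS : StraightNearMultipleK f) (hk₁ : k.1 ∈ CrossingK f) (hk₂ : k.2 ∈ CrossingK f)
    (hk : ∀ j, gap j k ≤ 0) :
    ∀ᶠ δ in 𝓝[>] (0 : ℝ), ∀ᶠ ε in 𝓝[>] (0 : ℝ), ∀ g, IsEtaForm ε g →
      IntegrableOn (pairDensity f g) (Metric.ball k δ) ∧
        ∫ z in chordPairsX ∩ Metric.ball k δ, pairDensity f g z =
          weightX k * (csignK f k.1 * csignK f k.2) := by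
  have hball := eventually_setIntegral_ball_pairDensity hf hD hk₁ hk₂
  by_cases hX : ∀ i, gap i k < 0
  · filter_upwards [hball,
      nhdsWithin_le_nhds (eventually_ball_subset (isOpen_chordPairsX.mem_nhds hX))] with δ h hsub
    filter_upwards [h] with ε h g hg
    rw [inter_eq_right.2 hsub, weightX, if_pos hX, one_mul]
    exact h g hg
  · obtain ⟨i, hi⟩ := not_forall.1 hX
    replace hi : gap i k = 0 := (hk i).antisymm (not_lt.1 hi)
    filter_upwards [hball,
      eventually_gap_neg_on_ball fun j => gap_neg_of_ne hk₁ hk₂ hk hi,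
      eventually_isHalfTurnSymm_of_gap_eq_zero hS hk₁ hk₂ hk hi] with δ h hlt ⟨hs₁, hs₂⟩
    filter_upwards [h] with ε h g hg
    obtain ⟨hint, hval⟩ := h g hg
    refine ⟨hint, ?_⟩
    rw [chordPairsX_inter_ball hlt, setIntegral_ball_inter_halfSpace (gap_ne_zero i) hi hint, hval,
      weightX, if_neg hX]
    intro z hz
    have hdiff := hf.differentiable one_ne_zero
    rw [← ball_prod_same] at hz
    exact congrArg₂ (· * ·) (hs₁.1.chordDensity_reflect hs₁.2 hdiff hk₁.2.1 hg hz.1)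
      (hs₂.1.chordDensity_reflect hs₂.2 hdiff hk₂.2.1 hg hz.2)

end PairOfCrossings

/-! ### The value of `I_X` -/

/-- The identification of pairs of chords `((x₁, x₃), (x₄, x₂))` with quadruples
`(x₁, x₂, x₃, x₄)`. -/
def chordPairEquiv : ChordPair ≃ᵐ E4 where
  toFun k := !₂[k.1.1, k.2.2, k.1.2, k.2.1]
  invFun x := ((x 0, x 2), (x 3, x 1))
  left_inv _ := rfl
  right_inv x := by ext i; fin_cases i <;> rfl
  measurable_toFun := (MeasurableEquiv.toLp 2 (Fin 4 → ℝ)).measurable.comp <|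
    show Measurable fun k : ChordPair => ![k.1.1, k.2.2, k.1.2, k.2.1] from
      measurable_pi_iff.2 (Fin.forall_fin_succ.2 ⟨by fun_prop, Fin.forall_fin_succ.2
        ⟨by fun_prop, Fin.forall_fin_two.2 ⟨by fun_prop, by fun_prop⟩⟩⟩)
  measurable_invFun :=
    show Measurable fun x : E4 => ((x 0, x 2), (x 3, x 1)) by fun_prop

lemma chordPairEquiv_apply (k : ChordPair) :
    chordPairEquiv k = !₂[k.1.1, k.2.2, k.1.2, k.2.1] := rfl

lemma measurePreserving_chordPairEquiv : MeasurePreserving chordPairEquiv := by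
  refine measurePreserving_of_volume_preimage_box chordPairEquiv.measurable fun s _ => ?_
  have hpre : chordPairEquiv ⁻¹' {x | ∀ i, x i ∈ s i} = (s 0 ×ˢ s 2) ×ˢ (s 3 ×ˢ s 1) := by
    ext
    simp [chordPairEquiv_apply, Fin.forall_fin_succ]
    tauto
  rw [hpre, Measure.volume_eq_prod, Measure.prod_prod, Measure.volume_eq_prod, Measure.prod_prod,
    Measure.prod_prod, Fin.prod_univ_four]
  ring

lemma IX_eq_setIntegral_pairDensity {f : ℝ → E3} (hf : Differentiable ℝ f)
    (hinj : Function.Injective f) (g : E3 → ℝ) :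
    IX f g = ∫ k in chordPairsX, pairDensity f g k := by
  have hpre : chordPairEquiv ⁻¹' CX = chordPairsX := by
    ext k
    simp [chordPairEquiv_apply, CX, chordPairsX, forall_gap_neg]
  rw [IX, ← measurePreserving_chordPairEquiv.setIntegral_preimage_emb
    chordPairEquiv.measurableEmbedding, hpre]
  refine setIntegral_congr_fun isOpen_chordPairsX.measurableSet fun k hk => ?_
  obtain ⟨h₁₂, h₂₃, h₃₄⟩ := forall_gap_neg.1 hk
  exact omegaX_eq hf g (hinj.ne (h₁₂.trans h₂₃).ne') (hinj.ne (h₂₃.trans h₃₄).ne)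

section Localization

variable {X Y ι : Type*} [MeasurableSpace X] {μ : Measure X}

lemma setIntegral_eq_sum_setIntegral_inter {F : X → ℝ} {S : Set X} (hS : MeasurableSet S)
    {t : Finset ι} {B : ι → Set X} (hB : ∀ i ∈ t, MeasurableSet (B i))
    (hdisj : (t : Set ι).PairwiseDisjoint B) (hint : ∀ i ∈ t, IntegrableOn F (S ∩ B i) μ)
    (hsupp : ∀ x ∈ S, F x ≠ 0 → ∃ i ∈ t, x ∈ B i) :
    ∫ x in S, F x ∂μ = ∑ i ∈ t, ∫ x in S ∩ B i, F x ∂μ := by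
  rw [← integral_biUnion_finset t (fun i hi => hS.inter (hB i hi))
    (fun i hi j hj hij => (hdisj hi hj hij).mono inter_subset_right inter_subset_right) hint]
  refine setIntegral_eq_of_subset_of_forall_sdiff_eq_zero hS
    (iUnion₂_subset fun i _ => inter_subset_left) fun x ⟨hx, hout⟩ => of_not_not fun hF => hout ?_
  obtain ⟨i, hi, hxi⟩ := hsupp x hx hF
  exact mem_iUnion₂.2 ⟨i, hi, hx, hxi⟩

lemma eventually_pairwiseDisjoint_ball [MetricSpace Y] {K : Set Y} (hK : K.Finite) :
    ∀ᶠ δ in 𝓝[>] (0 : ℝ), K.PairwiseDisjoint (Metric.ball · δ) := by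
  have hpair : ∀ᶠ δ in 𝓝[>] (0 : ℝ), ∀ k ∈ K, ∀ k' ∈ K, k ≠ k' →
      Disjoint (Metric.ball k δ) (Metric.ball k' δ) :=
    (eventually_all_finite hK).2 fun k _ => (eventually_all_finite hK).2 fun k' _ =>
      eventually_imp_distrib_left.2 fun hne => by
        filter_upwards [Ioo_mem_nhdsGT (half_pos (dist_pos.2 hne))] with δ hδ
        exact Metric.ball_disjoint_ball (by linarith [hδ.2])
  exact hpair.mono fun δ h k hk k' hk' => h k hk k' hk'

end Localization

lemma mem_steepChords_of_chordDensity_ne_zero {f : ℝ → E3} (hinj : Function.Injective f) {ε : ℝ}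
    {g : E3 → ℝ} (hg : IsEtaForm ε g) {p : ℝ × ℝ} (hp : chordDensity f g p ≠ 0) :
    p ∈ steepChords f ε := by
  have hne : p.1 ≠ p.2 := fun h => hp (by simp [chordDensity, chordDet, det3, h])
  exact ⟨hne, .of_etaForm_ne_zero hg (sub_ne_zero.2 (hinj.ne hne.symm)) (left_ne_zero_of_mul hp)⟩

section LongKnot

variable {f : ℝ → E3} (hf : IsLongKnot f) (hD : TransverseK f)
include hf hD

lemma eventually_IX_eq_finsum (hS : StraightNearMultipleK f) :
    ∀ᶠ ε in 𝓝[>] (0 : ℝ), ∀ g, IsEtaForm ε g →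
      IX f g = ∑ᶠ k ∈ steepPairs f 0, weightX k * (csignK f k.1 * csignK f k.2) := by
  have hC1 : ContDiff ℝ 1 f := hf.1.of_le (mod_cast le_top)
  have hfin := finite_steepPairs_zero hf hD
  have hlocal := (eventually_all_finite hfin).2 fun k hk =>
    have h := (mem_steepPairs_zero hf.2.1).1 hk
    eventually_setIntegral_chordPairsX_inter_ball hC1 hD hS h.1 h.2.1 h.2.2
  obtain ⟨δ, ⟨hdisj, hlocal⟩, hδ⟩ :=
    (((eventually_pairwiseDisjoint_ball hfin).and hlocal).and self_mem_nhdsWithin).exists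
  have hnear := eventually_steepPairs_subset hf hD
    (isOpen_biUnion fun k (_ : k ∈ steepPairs f 0) => Metric.isOpen_ball (x := k) (ε := δ))
    fun k hk => mem_biUnion hk (Metric.mem_ball_self hδ)
  filter_upwards [nhdsWithin_le_nhds hnear, (eventually_all_finite hfin).2 hlocal]
    with ε hnear hlocal g hg
  rw [IX_eq_setIntegral_pairDensity (hC1.differentiable one_ne_zero) hf.2.1,
    finsum_mem_eq_finite_toFinset_sum _ hfin,
    setIntegral_eq_sum_setIntegral_inter isOpen_chordPairsX.measurableSet (t := hfin.toFinset)
      (B := (Metric.ball · δ)) (fun _ _ => measurableSet_ball) (by simpa using hdisj)]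
  · exact Finset.sum_congr rfl fun k hk => (hlocal k (hfin.mem_toFinset.1 hk) g hg).2
  · exact fun k hk => (hlocal k (hfin.mem_toFinset.1 hk) g hg).1.mono_set inter_subset_right
  · intro k hk hne
    simpa using hnear ⟨mem_steepChords_of_chordDensity_ne_zero hf.2.1 hg (left_ne_zero_of_mul hne),
      mem_steepChords_of_chordDensity_ne_zero hf.2.1 hg (right_ne_zero_of_mul hne),
      fun i => (hk i).le⟩

open Classical in
lemma pairK_eq_sum_ite {R : ℝ × ℝ → ℝ × ℝ → Prop}
    (hR : ∀ k : ChordPair, R k.1 k.2 → ∀ i, gap i k ≤ 0) :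
    pairK f R = ∑ k ∈ (finite_steepPairs_zero hf hD).toFinset,
      if R k.1 k.2 then csignK f k.1 * csignK f k.2 else 0 := by
  rw [← Finset.sum_filter, ← finsum_mem_coe_finset, pairK]
  congr! 3 with k
  rw [Finset.mem_coe, Finset.mem_filter, Finite.mem_toFinset, mem_steepPairs_zero hf.2.1]
  grind

lemma finsum_steepPairs_zero_eq :
    ∑ᶠ k ∈ steepPairs f 0, weightX k * (csignK f k.1 * csignK f k.2) =
      pairXK f + (1 / 2) * (pairX1K f + pairX2K f + pairX3K f) := by
  classical
  rw [pairXK, pairX1K, pairX2K, pairX3K, pairK_eq_sum_ite hf hD, pairK_eq_sum_ite hf hD,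
    pairK_eq_sum_ite hf hD, pairK_eq_sum_ite hf hD, ← Finset.sum_add_distrib,
    ← Finset.sum_add_distrib, Finset.mul_sum, ← Finset.sum_add_distrib,
    finsum_mem_eq_finite_toFinset_sum _ (finite_steepPairs_zero hf hD)]
  · refine Finset.sum_congr rfl fun k hk => ?_
    rw [Finite.mem_toFinset, mem_steepPairs_zero hf.2.1] at hk
    obtain ⟨hk₁, hk₂, hk⟩ := hk
    have hwall₀ := fun h => gap_neg_of_ne (i := 0) (j := 1) hk₁ hk₂ hk h one_ne_zero
    have hwall₁ := fun h => gap_neg_of_ne (i := 1) (j := 2) hk₁ hk₂ hk h (by decide)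
    have hwall₂ := fun h => gap_neg_of_ne (i := 2) (j := 0) hk₁ hk₂ hk h (by decide)
    simp only [gap_zero_apply, gap_one_apply, gap_two_apply, sub_eq_zero, sub_neg]
      at hwall₀ hwall₁ hwall₂
    simp only [weightX, forall_gap_neg]
    rw [forall_gap_nonpos] at hk
    split_ifs <;> grind
  all_goals
    intro k hk
    rw [forall_gap_nonpos]
    grind

end LongKnot

/-! ### The vanishing of `I_Y` -/

/-- The isometry of `ℝⁿ` that fixes `c` and has linear part `axisFlip s`. -/
def flipAbout {n : ℕ} (s : Fin n → ℤˣ) (c x : EuclideanSpace ℝ (Fin n)) :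
    EuclideanSpace ℝ (Fin n) :=
  axisFlip s (x - c) + c

section FlipAbout

variable {n : ℕ} {s : Fin n → ℤˣ} {c x : EuclideanSpace ℝ (Fin n)}

lemma flipAbout_apply (i : Fin n) : flipAbout s c x i = (s i : ℤ) * (x i - c i) + c i := by
  rw [flipAbout, PiLp.add_apply, axisFlip_apply, PiLp.sub_apply]

lemma flipAbout_apply_of_neg {i : Fin n} (hi : s i = -1) : flipAbout s c x i = c i + c i - x i := by
  rw [flipAbout_apply, hi]
  push_cast
  ring

lemma involutive_flipAbout : Function.Involutive (flipAbout s c) := fun x => by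
  ext i
  rcases Int.units_eq_one_or (s i) with h | h <;> simp [flipAbout_apply, h]

lemma measurePreserving_flipAbout : MeasurePreserving (flipAbout s c) :=
  (measurePreserving_add_right volume c).comp
    ((axisFlip s).measurePreserving.comp (measurePreserving_sub_right volume c))

lemma pdv_flipAbout {h : EuclideanSpace ℝ (Fin n) → E3}
    (hsymm : ∀ᶠ y in 𝓝 x, h (flipAbout s c y) = halfTurn (h y)) (i : Fin n) :
    halfTurn (pdv h i x) = ((s i : ℤ) : ℝ) • pdv h i (flipAbout s c x) := by
  let L : EuclideanSpace ℝ (Fin n) ≃L[ℝ] EuclideanSpace ℝ (Fin n) :=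
    (axisFlip s).toContinuousLinearEquiv
  have hchain : fderiv ℝ (fun y => h (flipAbout s c y)) x =
      (fderiv ℝ h (flipAbout s c x)).comp (L : _ →L[ℝ] _) :=
    calc _ = fderiv ℝ (fun y => h (L y + c)) (x - c) :=
          fderiv_comp_sub (f := fun y => h (L y + c)) c
      _ = (fderiv ℝ (fun y => h (y + c)) (L (x - c))).comp (L : _ →L[ℝ] _) :=
          L.comp_right_fderiv (f := fun y => h (y + c))
      _ = _ := by rw [fderiv_comp_add_right]; rfl
  calc halfTurn (pdv h i x)
      = fderiv ℝ (fun y => halfTurn (h y)) x (EuclideanSpace.single i 1) :=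
        (DFunLike.congr_fun halfTurn.comp_fderiv _).symm
    _ = fderiv ℝ (fun y => h (flipAbout s c y)) x (EuclideanSpace.single i 1) := by
        rw [EventuallyEq.fderiv_eq hsymm]
    _ = fderiv ℝ h (flipAbout s c x) (axisFlip s (EuclideanSpace.single i 1)) := by
        rw [hchain]; rfl
    _ = _ := by rw [axisFlip_single, map_smul]; rfl

lemma form2_unitv_flipAbout {ε : ℝ} {g : E3 → ℝ} (hg : IsEtaForm ε g)
    {D : EuclideanSpace ℝ (Fin n) → E3}
    (hsymm : ∀ᶠ y in 𝓝 x, D (flipAbout s c y) = halfTurn (D y)) (i j : Fin n) :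
    form2 g (fun y => unitv (D y)) (flipAbout s c x) i j =
      (s i : ℤ) * (s j : ℤ) * form2 g (fun y => unitv (D y)) x i j := by
  have hunit : ∀ᶠ y in 𝓝 x, unitv (D (flipAbout s c y)) = halfTurn (unitv (D y)) :=
    hsymm.mono fun y hy => by rw [hy, unitv_map]
  have hpdv := pdv_flipAbout (h := fun y => unitv (D y)) hunit
  rw [form2, form2, hsymm.self_of_nhds, hg.apply_unitv_halfTurn, unitv_map,
    ← det3_halfTurn (unitv (D x)) (pdv _ i x), hpdv, hpdv]
  simp only [det3, PiLp.smul_apply, smul_eq_mul]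
  rcases Int.units_eq_one_or (s i) with h | h <;> rcases Int.units_eq_one_or (s j) with h' | h' <;>
    simp only [h, h'] <;> push_cast <;> ring

end FlipAbout

lemma wedge222_eq_prod_mul {g : E3 → ℝ} {h k l : E6 → E3} {s : Fin 6 → ℝ} {x y : E6}
    (hh : ∀ i j, form2 g h y i j = s i * s j * form2 g h x i j)
    (hk : ∀ i j, form2 g k y i j = s i * s j * form2 g k x i j)
    (hl : ∀ i j, form2 g l y i j = s i * s j * form2 g l x i j) :
    wedge222 g h k l y = (∏ i, s i) * wedge222 g h k l x := by
  unfold wedge222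
  rw [mul_left_comm, Finset.mul_sum (a := ∏ i, s i)]
  congr 1
  refine Finset.sum_congr rfl fun σ _ => ?_
  rw [hh, hk, hl, ← Equiv.prod_comp σ s, Fin.prod_univ_six]
  ring

lemma setIntegral_eq_zero_of_comp_eq_neg {α : Type*} [MeasurableSpace α] {μ : Measure α}
    {T : α → α} (hT : MeasurePreserving T μ μ) (hinv : Function.Involutive T) {A : Set α}
    (hA : MeasurableSet A) (hTA : MapsTo T A A) {F : α → ℝ} (hF : ∀ x ∈ A, F (T x) = -F x) :
    ∫ x in A, F x ∂μ = 0 := by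
  have hpre : T ⁻¹' A = A := Subset.antisymm (fun x hx => hinv x ▸ hTA hx) hTA
  have hsymm := hT.setIntegral_preimage_emb
    (MeasurableEquiv.ofInvolutive T hinv hT.measurable).measurableEmbedding F A
  rw [hpre, setIntegral_congr_fun hA hF, integral_neg] at hsymm
  linarith

lemma continuous_ptY : Continuous ptY :=
  (PiLp.continuous_toLp 2 _).comp <|
    show Continuous fun x : E6 => ![x 3, x 4, x 5] by fun_prop

lemma isOpen_CY {f : ℝ → E3} (hf : Continuous f) : IsOpen (CY f) := by
  have hlt (i j : Fin 6) : IsOpen {x : E6 | x i < x j} := isOpen_lt (by fun_prop) (by fun_prop)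
  have hleg (j : Fin 6) : IsOpen {x : E6 | ptY x ≠ f (x j)} :=
    isOpen_ne_fun continuous_ptY (hf.comp (by fun_prop))
  exact (hlt 0 1).inter <| (hlt 1 2).inter <| (hleg 0).inter <| (hleg 1).inter (hleg 2)

/-- The chords `(x₁, x₂)` and `(x₃, x₂)` spanned by the legs of a configuration in `C_Y`. -/
def chordsY (x : E6) : ChordPair := ((x 0, x 1), (x 2, x 1))

lemma continuous_chordsY : Continuous chordsY := by unfold chordsY; fun_prop

/-- The signs by which the symmetry of a multiple point acts on `(x₁, x₂, x₃; x₄)`: time is reversed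
on each strand, and the free point is turned about a vertical axis. -/
def signsY : Fin 6 → ℤˣ := ![-1, -1, -1, -1, -1, 1]

section Center

variable {f : ℝ → E3} {c x : E6} {δ : ℝ}

lemma lt_three_iff {j : Fin 6} : j < 3 ↔ j = 0 ∨ j = 1 ∨ j = 2 := by decide +revert

lemma signsY_of_lt {j : Fin 6} (hj : j < 3) : signsY j = -1 := by decide +revert

lemma chordsY_flipAbout : chordsY (flipAbout signsY c x) = chordsY c + chordsY c - chordsY x := by
  simp only [chordsY]
  rw [flipAbout_apply_of_neg (signsY_of_lt (j := 0) (by decide)),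
    flipAbout_apply_of_neg (signsY_of_lt (j := 1) (by decide)),
    flipAbout_apply_of_neg (signsY_of_lt (j := 2) (by decide))]
  rfl

lemma mem_ball_of_chordsY_mem_ball (hx : chordsY x ∈ Metric.ball (chordsY c) δ) {j : Fin 6}
    (hj : j < 3) : x j ∈ Metric.ball (c j) δ := by
  simp only [chordsY, ← ball_prod_same, mem_prod] at hx
  rcases lt_three_iff.1 hj with rfl | rfl | rfl
  exacts [hx.1.1, hx.1.2, hx.2.1]

lemma ptY_sub_flipAbout {j : Fin 6} (hj : j < 3) (hc : pr12 (ptY c) = pr12 (f (c j)))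
    (hsymm : IsHalfTurnSymm f (c j) δ) (hx : x j ∈ Metric.ball (c j) δ) :
    ptY (flipAbout signsY c x) - f (flipAbout signsY c x j) = halfTurn (ptY x - f (x j)) := by
  have hpt : ptY (flipAbout signsY c x) - f (c j) = halfTurn (ptY x - f (c j)) := by
    obtain ⟨h0, h1⟩ : c 3 = f (c j) 0 ∧ c 4 = f (c j) 1 := Prod.mk.inj hc
    apply E3_ext <;> simp [ptY, mk3, flipAbout_apply, signsY, ← h0, ← h1, neg_add_eq_sub]
  rw [flipAbout_apply_of_neg (signsY_of_lt hj), ← sub_sub_sub_cancel_right _ _ (f (c j)), hpt,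
    hsymm _ hx, ← map_sub, sub_sub_sub_cancel_right]

variable (hc : ∀ j < 3, pr12 (ptY c) = pr12 (f (c j)))
  (hsymm : ∀ j < 3, IsHalfTurnSymm f (c j) δ)
include hc hsymm

lemma omegaY_flipAbout {ε : ℝ} {g : E3 → ℝ} (hg : IsEtaForm ε g)
    (hx : chordsY x ∈ Metric.ball (chordsY c) δ) :
    omegaY f g (flipAbout signsY c x) = -omegaY f g x := by
  have hleg {j : Fin 6} (hj : j < 3) : ∀ᶠ y in 𝓝 x,
      ptY (flipAbout signsY c y) - f (flipAbout signsY c y j) = halfTurn (ptY y - f (y j)) := by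
    filter_upwards [continuous_chordsY.continuousAt.eventually_mem (Metric.isOpen_ball.mem_nhds hx)]
      with y hy
    exact ptY_sub_flipAbout hj (hc j hj) (hsymm j hj) (mem_ball_of_chordsY_mem_ball hy hj)
  have hleg₁ : ∀ᶠ y in 𝓝 x, f (flipAbout signsY c y 1) - ptY (flipAbout signsY c y) =
      halfTurn (f (y 1) - ptY y) :=
    (hleg (j := 1) (by decide)).mono fun y hy => by rw [← neg_sub, hy, ← map_neg, neg_sub]
  have hprod : ∏ i, ((signsY i : ℤ) : ℝ) = -1 := by simp [signsY, Fin.prod_univ_succ]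
  rw [omegaY, wedge222_eq_prod_mul (form2_unitv_flipAbout hg (hleg (j := 0) (by decide)))
    (form2_unitv_flipAbout hg hleg₁) (form2_unitv_flipAbout hg (hleg (j := 2) (by decide))),
    hprod, neg_one_mul]

lemma mapsTo_flipAbout
    (hlt : ∀ z ∈ Metric.ball (chordsY c) δ, ∀ j ≠ 1, gap j z < 0) :
    MapsTo (flipAbout signsY c) (CY f ∩ chordsY ⁻¹' Metric.ball (chordsY c) δ)
      (CY f ∩ chordsY ⁻¹' Metric.ball (chordsY c) δ) := by
  intro x ⟨⟨_, _, h₀, h₁, h₂⟩, hx⟩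
  have hball : chordsY (flipAbout signsY c x) ∈ Metric.ball (chordsY c) δ := by
    rw [chordsY_flipAbout]
    exact add_self_sub_mem_ball.2 hx
  have hleg {j : Fin 6} (hj : j < 3) (hne : ptY x ≠ f (x j)) :
      ptY (flipAbout signsY c x) ≠ f (flipAbout signsY c x j) := by
    rw [← sub_ne_zero] at hne ⊢
    rw [ptY_sub_flipAbout hj (hc j hj) (hsymm j hj) (mem_ball_of_chordsY_mem_ball hx hj)]
    exact (map_ne_zero_iff _ halfTurn.injective).2 hne
  exact ⟨⟨sub_neg.1 (hlt _ hball 0 (by decide)), sub_neg.1 (hlt _ hball 2 (by decide)),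
    hleg (by decide) h₀, hleg (by decide) h₁, hleg (by decide) h₂⟩, hball⟩

lemma setIntegral_omegaY_eq_zero (hf : Continuous f) {ε : ℝ} {g : E3 → ℝ} (hg : IsEtaForm ε g)
    (hlt : ∀ z ∈ Metric.ball (chordsY c) δ, ∀ j ≠ 1, gap j z < 0) :
    ∫ x in CY f ∩ chordsY ⁻¹' Metric.ball (chordsY c) δ, omegaY f g x = 0 :=
  setIntegral_eq_zero_of_comp_eq_neg measurePreserving_flipAbout involutive_flipAbout
    ((isOpen_CY hf).inter (Metric.isOpen_ball.preimage continuous_chordsY)).measurableSet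
    (mapsTo_flipAbout hc hsymm hlt) fun _ hx => omegaY_flipAbout hc hsymm hg hx.2

end Center

lemma eventually_setIntegral_omegaY_eq_zero {f : ℝ → E3} (hf : Continuous f)
    (hS : StraightNearMultipleK f) {k : ChordPair} (hk₁ : k.1 ∈ CrossingK f)
    (hk₂ : k.2 ∈ CrossingK f) (hk : ∀ i, gap i k ≤ 0) :
    ∀ᶠ δ in 𝓝[>] (0 : ℝ), ∀ ε g, IsEtaForm ε g →
      ∫ x in CY f ∩ chordsY ⁻¹' Metric.ball k δ, omegaY f g x = 0 := by
  rcases (hk 1).lt_or_eq with h₁ | h₁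
  · have hnear : ∀ᶠ z in 𝓝 k, gap 1 z < 0 :=
      (continuous_gap 1).continuousAt.eventually_lt continuousAt_const h₁
    filter_upwards [nhdsWithin_le_nhds (eventually_ball_subset hnear)] with δ hδ ε g _
    have hempty : chordsY ⁻¹' Metric.ball k δ = ∅ :=
      eq_empty_of_forall_notMem fun x hx => (hδ hx).ne (sub_self (x 1))
    rw [hempty, inter_empty, setIntegral_empty]
  · have hlt := eventually_gap_neg_on_ball fun j hj => gap_neg_of_ne hk₁ hk₂ hk h₁ hj
    have hsymm := eventually_isHalfTurnSymm_of_gap_eq_zero hS hk₁ hk₂ hk h₁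
    obtain ⟨⟨x₁, y⟩, x₃, x₂⟩ := k
    obtain rfl : x₂ = y := sub_eq_zero.1 h₁
    filter_upwards [hlt, hsymm] with δ hlt hsymm ε g hg
    refine setIntegral_omegaY_eq_zero (c := !₂[x₁, x₂, x₃, f x₁ 0, f x₁ 1, 0]) (fun j hj => ?_)
      (fun j hj => ?_) hf hg hlt
    · rcases lt_three_iff.1 hj with rfl | rfl | rfl
      exacts [rfl, hk₁.2.1, hk₁.2.1.trans hk₂.2.1.symm]
    · rcases lt_three_iff.1 hj with rfl | rfl | rfl
      exacts [hsymm.1.1, hsymm.1.2, hsymm.2.1]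

lemma chordsY_mem_steepPairs {f : ℝ → E3} {ε : ℝ} (hε : ε ≤ 1) {g : E3 → ℝ} (hg : IsEtaForm ε g)
    {x : E6} (hx : x ∈ CY f) (hne : omegaY f g x ≠ 0) : chordsY x ∈ steepPairs f ε := by
  obtain ⟨h₀₁, h₁₂, hx₀, hx₁, hx₂⟩ := hx
  have hsteep₀ : IsSteep ε (ptY x - f (x 0)) :=
    .of_etaForm_ne_zero hg (sub_ne_zero.2 hx₀) fun h => hne (by simp [omegaY, wedge222, form2, h])
  have hsteep₁ : IsSteep ε (f (x 1) - ptY x) :=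
    .of_etaForm_ne_zero hg (sub_ne_zero.2 hx₁.symm) fun h =>
      hne (by simp [omegaY, wedge222, form2, h])
  have hsteep₂ : IsSteep ε (ptY x - f (x 2)) :=
    .of_etaForm_ne_zero hg (sub_ne_zero.2 hx₂) fun h => hne (by simp [omegaY, wedge222, form2, h])
  refine ⟨⟨h₀₁.ne, ?_⟩, ⟨h₁₂.ne', ?_⟩, forall_gap_nonpos.2 ⟨h₀₁.le, le_rfl, h₁₂.le⟩⟩
  · exact sub_add_sub_cancel (f (x 1)) (ptY x) (f (x 0)) ▸ hsteep₁.add hε hsteep₀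
  · exact sub_add_sub_cancel (f (x 1)) (ptY x) (f (x 2)) ▸ hsteep₁.add hε hsteep₂

lemma eventually_IY_eq_zero {f : ℝ → E3} (hf : IsLongKnot f) (hD : TransverseK f)
    (hS : StraightNearMultipleK f) :
    ∀ᶠ ε in 𝓝[>] (0 : ℝ), ∀ g, IsEtaForm ε g → IY f g = 0 := by
  have hfin := finite_steepPairs_zero hf hD
  have hlocal := (eventually_all_finite hfin).2 fun k hk =>
    have h := (mem_steepPairs_zero hf.2.1).1 hk
    eventually_setIntegral_omegaY_eq_zero hf.1.continuous hS h.1 h.2.1 h.2.2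
  obtain ⟨δ, ⟨hdisj, hlocal⟩, hδ⟩ :=
    (((eventually_pairwiseDisjoint_ball hfin).and hlocal).and self_mem_nhdsWithin).exists
  have hnear := eventually_steepPairs_subset hf hD
    (isOpen_biUnion fun k (_ : k ∈ steepPairs f 0) => Metric.isOpen_ball (x := k) (ε := δ))
    fun k hk => mem_biUnion hk (Metric.mem_ball_self hδ)
  filter_upwards [nhdsWithin_le_nhds hnear, Ioc_mem_nhdsGT one_pos] with ε hnear hε g hg
  by_cases hint : IntegrableOn (omegaY f g) (CY f)
  · rw [IY, setIntegral_eq_sum_setIntegral_inter (isOpen_CY hf.1.continuous).measurableSet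
      (t := hfin.toFinset) (B := fun k => chordsY ⁻¹' Metric.ball k δ)]
    · exact Finset.sum_eq_zero fun k hk => hlocal k (hfin.mem_toFinset.1 hk) ε g hg
    · exact fun k _ => (Metric.isOpen_ball.preimage continuous_chordsY).measurableSet
    · rw [hfin.coe_toFinset]
      exact fun k hk k' hk' hne => (hdisj hk hk' hne).preimage _
    · exact fun k _ => hint.mono_set inter_subset_left
    · intro x hx hne
      simpa using hnear (chordsY_mem_steepPairs hε.2 hg hx hne)
  · -- The Bochner integral of a non-integrable function is `0`.
    exact integral_undef hint

/-- localization of the knot integrals for diagrams with multiple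
crossings. Let `f` be a long knot with an arbitrary transverse diagram (triple and
higher crossings allowed), whose subarcs near each multiple crossing are straight
segments parallel to the plane `N^⊥`. Then for all sufficiently small `ε > 0`,
`I_X(f) = ⟨X, G_D⟩ + (1/2)(⟨X′₁, G_D⟩ + ⟨X′₂, G_D⟩ + ⟨X′₃, G_D⟩)` and `I_Y(f) = 0`. -/
theorem statement17 (f : ℝ → E3) (hf : IsLongKnot f) (hD : TransverseK f)
    (hS : StraightNearMultipleK f) :
    ∃ ε₀ > (0 : ℝ), ∀ ε : ℝ, 0 < ε → ε < ε₀ → ∀ g : E3 → ℝ, IsEtaForm ε g →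
      IX f g = pairXK f + (1 / 2) * (pairX1K f + pairX2K f + pairX3K f) ∧
      IY f g = 0 := by
  obtain ⟨ε₀, hε₀, hsub⟩ := mem_nhdsGT_iff_exists_Ioo_subset.1
    ((eventually_IX_eq_finsum hf hD hS).and (eventually_IY_eq_zero hf hD hS))
  refine ⟨ε₀, hε₀, fun ε hpos hlt g hg => ?_⟩
  obtain ⟨hIX, hIY⟩ := hsub ⟨hpos, hlt⟩
  exact ⟨(hIX g hg).trans (finsum_steepPairs_zero_eq hf hD), hIY g hg⟩

end
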